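/- arXiv:1704.03244 — 2 statements merged into one kernel-verified Lean document; each statement's English description precedes it below -/
import Mathlib

section
/- Let W = (W_t)_{t≥0} be a standard one-dimensional Brownian motion on a probability space (Ω, F, P). For every fixed t > 0 and every level a ∈ ℝ, the limit L_t(a) := lim_{ε→0+} (1/(2ε)) · λ{ s ∈ [0,t] : |W_s − a| ≤ ε } exists almost surely and defines a nonnegative, almost surely finite random variable (the Brownian local time of W at level a up to time t). -/
open MeasureTheory ProbabilityTheory Filter Set
open scoped ENNReal NNReal

/-- `W` is a standard one-dimensional Brownian motion on `(Ω, F, P)`: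
`W 0 = 0`, measurable coordinates, a.s. continuous paths, Gaussian increments
`W t - W s ~ N(0, t - s)` and independent increments. -/
structure IsBrownianMotion {Ω : Type*} [MeasurableSpace Ω] (P : Measure Ω)
    (W : ℝ → Ω → ℝ) : Prop where
  isProb : IsProbabilityMeasure P
  init : ∀ ω, W 0 ω = 0
  meas : ∀ t, Measurable (W t)
  cont : ∀ᵐ ω ∂P, Continuous fun t => W t ω
  incr_law : ∀ s t : ℝ, 0 ≤ s → s ≤ t →
    Measure.map (fun ω => W t ω - W s ω) P = gaussianReal 0 (Real.toNNReal (t - s))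
  indep_incr : ∀ (n : ℕ) (t : Fin (n + 1) → ℝ), Monotone t → 0 ≤ t 0 →
    iIndepFun
      (fun i : Fin n => fun ω => W (t i.succ) ω - W (t i.castSucc) ω) P


noncomputable def btBox (ε x : ℝ) : ℝ := (Icc (-ε) ε).indicator (fun _ => 1 / (2 * ε)) x

lemma btBox_meas (ε : ℝ) : Measurable (btBox ε) :=
  measurable_const.indicator measurableSet_Icc

lemma btBox_nonneg {ε : ℝ} (hε : 0 < ε) (x : ℝ) : 0 ≤ btBox ε x :=
  indicator_nonneg (fun _ _ => by positivity) x

lemma btBox_le {ε : ℝ} (hε : 0 < ε) (x : ℝ) : btBox ε x ≤ 1 / (2 * ε) :=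
  indicator_le_self' (f := fun _ => 1 / (2 * ε)) (fun _ _ => by positivity) x

lemma bt_gauss {r ε : ℝ} (hr : 0 < r) (hε : 0 < ε) (b : ℝ) :
    ∫ z, btBox ε (z - b) ∂(gaussianReal 0 r.toNNReal)
      = (1 / 2) * ∫ v in (-1 : ℝ)..1, gaussianPDFReal 0 r.toNNReal (ε * v + b) := by
  have hr' : r.toNNReal ≠ 0 := by simpa using hr
  rw [integral_gaussianReal_eq_integral_smul hr']
  have h1 : (fun x => gaussianPDFReal 0 r.toNNReal x • btBox ε (x - b))
      = (Icc (b - ε) (b + ε)).indicator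
        (fun x => gaussianPDFReal 0 r.toNNReal x * (1 / (2 * ε))) := by
    ext x
    by_cases hx : x ∈ Icc (b - ε) (b + ε)
    · have : x - b ∈ Icc (-ε) ε := ⟨by linarith [hx.1], by linarith [hx.2]⟩
      simp [btBox, hx, this]
    · have : x - b ∉ Icc (-ε) ε := fun h => hx ⟨by linarith [h.1], by linarith [h.2]⟩
      simp only [btBox, indicator_of_notMem hx, indicator_of_notMem this, smul_zero]
  rw [h1, integral_indicator measurableSet_Icc, integral_Icc_eq_integral_Ioc,
    ← intervalIntegral.integral_of_le (by linarith), intervalIntegral.integral_mul_const,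
    intervalIntegral.integral_comp_mul_add _ hε.ne']
  rw [show ε * -1 + b = b - ε by ring, show ε * 1 + b = b + ε by ring, smul_eq_mul]
  field_simp

lemma bt_phi (x y : ℝ) :
    |Real.exp (-x ^ 2 / 2) - Real.exp (-y ^ 2 / 2)| ≤ Real.sqrt |x - y| := by
  have h1 : |Real.exp (-x ^ 2 / 2) - Real.exp (-y ^ 2 / 2)| ≤ 1 := by
    have := Real.exp_pos (-x ^ 2 / 2)
    have := Real.exp_pos (-y ^ 2 / 2)
    have : Real.exp (-x ^ 2 / 2) ≤ 1 := Real.exp_le_one_iff.2 (by nlinarith [sq_nonneg x])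
    have : Real.exp (-y ^ 2 / 2) ≤ 1 := Real.exp_le_one_iff.2 (by nlinarith [sq_nonneg y])
    rw [abs_le]; constructor <;> linarith
  have h2 : |Real.exp (-x ^ 2 / 2) - Real.exp (-y ^ 2 / 2)| ≤ |x - y| := by
    have hd : ∀ z ∈ (univ : Set ℝ), HasDerivWithinAt (fun z : ℝ => Real.exp (-z ^ 2 / 2))
        (Real.exp (-z ^ 2 / 2) * (-z)) univ z := by
      intro z _
      have : HasDerivAt (fun z : ℝ => -z ^ 2 / 2) (-z) z := by
        have := ((hasDerivAt_pow 2 z).neg).div_const 2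
        have e : -(((2 : ℕ) : ℝ) * z ^ (2 - 1)) / 2 = -z := by norm_num; ring
        rw [e] at this
        exact this
      exact this.exp.hasDerivWithinAt
    have hb : ∀ z ∈ (univ : Set ℝ), ‖Real.exp (-z ^ 2 / 2) * (-z)‖ ≤ 1 := by
      intro z _
      rw [norm_mul, Real.norm_eq_abs, Real.norm_eq_abs, abs_neg, Real.abs_exp]
      have h3 : |z| ≤ Real.exp (z ^ 2 / 2) := by
        have := Real.add_one_le_exp (z ^ 2 / 2)
        nlinarith [sq_nonneg (|z| - 1), sq_abs z]
      rw [show -z ^ 2 / 2 = -(z ^ 2 / 2) by ring, Real.exp_neg]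
      rw [inv_mul_le_iff₀ (Real.exp_pos _)]
      simpa using h3
    have := (convex_univ (𝕜 := ℝ) (E := ℝ)).norm_image_sub_le_of_norm_hasDerivWithin_le hd hb
      (mem_univ y) (mem_univ x)
    simpa [Real.norm_eq_abs] using this
  apply Real.le_sqrt_of_sq_le
  nlinarith [abs_nonneg (Real.exp (-x ^ 2 / 2) - Real.exp (-y ^ 2 / 2))]

lemma bt_pdf_holder {r : ℝ} (hr : 0 < r) (x y : ℝ) :
    |gaussianPDFReal 0 r.toNNReal x - gaussianPDFReal 0 r.toNNReal y|
      ≤ r ^ (-(3 / 4) : ℝ) * Real.sqrt |x - y| := by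
  have hs : 0 < Real.sqrt r := Real.sqrt_pos.2 hr
  have key := bt_phi (x / Real.sqrt r) (y / Real.sqrt r)
  have e : ∀ z : ℝ, -(z / Real.sqrt r) ^ 2 / 2 = -(z - 0) ^ 2 / (2 * r) := by
    intro z; rw [div_pow, Real.sq_sqrt hr.le]; field_simp; ring
  rw [e, e, ← sub_div, abs_div, abs_of_pos hs, Real.sqrt_div (abs_nonneg _)] at key
  have h0 : (Real.sqrt (2 * Real.pi * r))⁻¹ ≤ (Real.sqrt r)⁻¹ := by
    apply inv_anti₀ hs
    apply Real.sqrt_le_sqrt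
    nlinarith [Real.pi_gt_three]
  have h1 : (Real.sqrt r)⁻¹ * (Real.sqrt |x - y| / Real.sqrt (Real.sqrt r))
      = r ^ (-(3 / 4) : ℝ) * Real.sqrt |x - y| := by
    have : (Real.sqrt r)⁻¹ * (Real.sqrt (Real.sqrt r))⁻¹ = r ^ (-(3 / 4) : ℝ) := by
      rw [Real.sqrt_eq_rpow r, Real.sqrt_eq_rpow, ← Real.rpow_mul hr.le, ← Real.rpow_neg hr.le,
        ← Real.rpow_neg hr.le, ← Real.rpow_add hr]
      norm_num
    rw [← this]; field_simp
  rw [← h1]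
  simp only [gaussianPDFReal, Real.coe_toNNReal r hr.le]
  rw [← mul_sub, abs_mul, abs_of_nonneg (by positivity)]
  gcongr

lemma bt_pdf_le {r : ℝ} (hr : 0 < r) (x : ℝ) :
    gaussianPDFReal 0 r.toNNReal x ≤ r ^ (-(1 / 2) : ℝ) := by
  have hs : 0 < Real.sqrt r := Real.sqrt_pos.2 hr
  have h0 : (Real.sqrt (2 * Real.pi * r))⁻¹ ≤ (Real.sqrt r)⁻¹ := by
    apply inv_anti₀ hs
    apply Real.sqrt_le_sqrt
    nlinarith [Real.pi_gt_three]
  simp only [gaussianPDFReal, Real.coe_toNNReal r hr.le]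
  rw [Real.rpow_neg hr.le, ← Real.sqrt_eq_rpow]
  have h1 : Real.exp (-(x - 0) ^ 2 / (2 * r)) ≤ 1 := by
    apply Real.exp_le_one_iff.2
    rw [neg_div]
    have : 0 ≤ (x - 0) ^ 2 / (2 * r) := by positivity
    linarith
  calc _ ≤ (Real.sqrt r)⁻¹ * 1 := by gcongr
    _ = _ := by simp

lemma bt_pdf_cont {r : ℝ} : Continuous (gaussianPDFReal 0 r.toNNReal) := by
  unfold gaussianPDFReal
  fun_prop

lemma bt_box_int {ε b : ℝ} (hε : 0 < ε) (μ : Measure ℝ) [IsFiniteMeasure μ] :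
    Integrable (fun z => btBox ε (z - b)) μ := by
  refine Integrable.of_bound (C := 1 / (2 * ε)) ?_ ?_
  · exact ((btBox_meas ε).comp (measurable_id.sub_const b)).aestronglyMeasurable
  · refine Eventually.of_forall fun z => ?_
    rw [Real.norm_eq_abs, abs_of_nonneg (btBox_nonneg hε _)]
    exact btBox_le hε _

lemma bt_gauss_le {r ε : ℝ} (hr : 0 < r) (hε : 0 < ε) (b : ℝ) :
    ∫ z, btBox ε (z - b) ∂(gaussianReal 0 r.toNNReal) ≤ r ^ (-(1 / 2) : ℝ) := by
  rw [bt_gauss hr hε]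
  have : ∫ v in (-1 : ℝ)..1, gaussianPDFReal 0 r.toNNReal (ε * v + b)
      ≤ ∫ v in (-1 : ℝ)..1, r ^ (-(1 / 2) : ℝ) := by
    apply intervalIntegral.integral_mono_on (by norm_num)
    · exact (bt_pdf_cont.comp (by fun_prop)).intervalIntegrable _ _
    · simp
    · intro x _; exact bt_pdf_le hr _
  rw [intervalIntegral.integral_const, smul_eq_mul] at this
  linarith

lemma bt_gauss_sub {r ε δ : ℝ} (hr : 0 < r) (hε : 0 < ε) (hδ : 0 < δ) (b : ℝ) :
    |∫ z, (btBox ε (z - b) - btBox δ (z - b)) ∂(gaussianReal 0 r.toNNReal)|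
      ≤ r ^ (-(3 / 4) : ℝ) * Real.sqrt |ε - δ| := by
  rw [integral_sub (bt_box_int hε _) (bt_box_int hδ _), bt_gauss hr hε, bt_gauss hr hδ,
    ← mul_sub, ← intervalIntegral.integral_sub]
  rotate_left
  · exact (bt_pdf_cont.comp (by fun_prop)).intervalIntegrable _ _
  · exact (bt_pdf_cont.comp (by fun_prop)).intervalIntegrable _ _
  have := intervalIntegral.norm_integral_le_of_norm_le_const (a := (-1 : ℝ)) (b := 1)
    (f := fun v => gaussianPDFReal 0 r.toNNReal (ε * v + b)
      - gaussianPDFReal 0 r.toNNReal (δ * v + b))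
    (C := r ^ (-(3 / 4) : ℝ) * Real.sqrt |ε - δ|) (by
      intro v hv
      rw [uIoc_of_le (by norm_num)] at hv
      refine (bt_pdf_holder hr _ _).trans ?_
      refine mul_le_mul_of_nonneg_left (Real.sqrt_le_sqrt ?_) (by positivity)
      rw [show ε * v + b - (δ * v + b) = (ε - δ) * v by ring, abs_mul]
      have : |v| ≤ 1 := abs_le.2 ⟨hv.1.le, hv.2⟩
      nlinarith [abs_nonneg (ε - δ)])
  rw [abs_mul, abs_of_pos (by norm_num)]
  rw [Real.norm_eq_abs] at this
  norm_num at this ⊢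
  linarith

lemma bt_pair {Ω : Type*} [MeasurableSpace Ω] {P : Measure Ω} {W : ℝ → Ω → ℝ}
    (hW : IsBrownianMotion P W) {s u : ℝ} (hs : 0 < s) (hu : s < u) :
    P.map (fun ω => (W s ω, W u ω - W s ω))
      = (gaussianReal 0 s.toNNReal).prod (gaussianReal 0 (u - s).toNNReal) := by
  have := hW.isProb
  have hm : Monotone (![0, s, u] : Fin 3 → ℝ) := by
    rw [Fin.monotone_iff_le_succ]
    intro i
    fin_cases i
    · simpa using hs.le
    · simpa using hu.le
  have hi := (hW.indep_incr 2 ![0, s, u] hm (by simp)).indepFun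
    (show (0 : Fin 2) ≠ 1 by decide)
  have hi' : IndepFun (W s) (fun ω => W u ω - W s ω) P := by
    have e : (fun ω => W s ω - W 0 ω) = W s := by
      ext ω; rw [hW.init]; simp
    have h2 : IndepFun (fun ω => W s ω - W 0 ω) (fun ω => W u ω - W s ω) P := hi
    rwa [e] at h2
  have h1 : P.map (W s) = gaussianReal 0 s.toNNReal := by
    have := hW.incr_law 0 s le_rfl hs.le
    simpa [hW.init] using this
  have hd : Measurable (fun ω => W u ω - W s ω) := (hW.meas u).sub (hW.meas s)
  rw [hi'.map_prod_eq_prod_map_map (hW.meas s).aemeasurable hd.aemeasurable, h1, hW.incr_law s u hs.le hu.le]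

noncomputable def btDiff (ε δ x : ℝ) : ℝ := btBox ε x - btBox δ x

lemma btDiff_meas (ε δ : ℝ) : Measurable (btDiff ε δ) := (btBox_meas ε).sub (btBox_meas δ)

lemma btDiff_le {ε δ : ℝ} (hε : 0 < ε) (hδ : 0 < δ) (x : ℝ) :
    ‖btDiff ε δ x‖ ≤ btBox ε x + btBox δ x := by
  have := btBox_nonneg hε x
  have := btBox_nonneg hδ x
  rw [Real.norm_eq_abs, btDiff, abs_le]
  constructor <;> linarith

lemma btDiff_le' {ε δ : ℝ} (hε : 0 < ε) (hδ : 0 < δ) (x : ℝ) :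
    ‖btDiff ε δ x‖ ≤ 1 / (2 * ε) + 1 / (2 * δ) :=
  (btDiff_le hε hδ x).trans (add_le_add (btBox_le hε x) (btBox_le hδ x))

lemma bt_cov {Ω : Type*} [MeasurableSpace Ω] {P : Measure Ω} {W : ℝ → Ω → ℝ}
    (hW : IsBrownianMotion P W) {s u ε δ : ℝ} (hs : 0 < s) (hu : s < u) (hε : 0 < ε)
    (hδ : 0 < δ) (a : ℝ) :
    |∫ ω, btDiff ε δ (W s ω - a) * btDiff ε δ (W u ω - a) ∂P|
      ≤ 2 * Real.sqrt |ε - δ| * ((u - s) ^ (-(3 / 4) : ℝ) * s ^ (-(1 / 2) : ℝ)) := by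
  have := hW.isProb
  have hF : Measurable (fun p : ℝ × ℝ => btDiff ε δ (p.1 - a) * btDiff ε δ (p.1 + p.2 - a)) :=
    ((btDiff_meas ε δ).comp (by fun_prop)).mul ((btDiff_meas ε δ).comp (by fun_prop))
  have hmeas : Measurable (fun ω => (W s ω, W u ω - W s ω)) :=
    (hW.meas s).prodMk ((hW.meas u).sub (hW.meas s))
  have e1 : ∫ ω, btDiff ε δ (W s ω - a) * btDiff ε δ (W u ω - a) ∂P
      = ∫ p, btDiff ε δ (p.1 - a) * btDiff ε δ (p.1 + p.2 - a)
        ∂((gaussianReal 0 s.toNNReal).prod (gaussianReal 0 (u - s).toNNReal)) := by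
    rw [← bt_pair hW hs hu, integral_map hmeas.aemeasurable hF.aestronglyMeasurable]
    simp
  have hint : Integrable
      (fun p : ℝ × ℝ => btDiff ε δ (p.1 - a) * btDiff ε δ (p.1 + p.2 - a))
      ((gaussianReal 0 s.toNNReal).prod (gaussianReal 0 (u - s).toNNReal)) := by
    refine Integrable.of_bound
      (C := (1 / (2 * ε) + 1 / (2 * δ)) * (1 / (2 * ε) + 1 / (2 * δ)))
      hF.aestronglyMeasurable (Eventually.of_forall fun p => ?_)
    rw [norm_mul]
    exact mul_le_mul (btDiff_le' hε hδ _) (btDiff_le' hε hδ _) (norm_nonneg _) (by positivity)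
  rw [e1, integral_prod _ hint]
  set B := (u - s) ^ (-(3 / 4) : ℝ) * Real.sqrt |ε - δ| with hB
  have hB0 : 0 ≤ B := by
    have : 0 < u - s := by linarith
    positivity
  have hpt : ∀ x, ‖∫ z, btDiff ε δ (x - a) * btDiff ε δ (x + z - a)
      ∂(gaussianReal 0 (u - s).toNNReal)‖
      ≤ (btBox ε (x - a) + btBox δ (x - a)) * B := by
    intro x
    rw [integral_const_mul, norm_mul]
    refine mul_le_mul (btDiff_le hε hδ _) ?_ (norm_nonneg _)
      (add_nonneg (btBox_nonneg hε _) (btBox_nonneg hδ _))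
    have := bt_gauss_sub (r := u - s) (by linarith) hε hδ (a - x)
    simp only [btDiff, Real.norm_eq_abs]
    have e : ∀ z, x + z - a = z - (a - x) := fun z => by ring
    simp only [e]
    exact this
  have hI : Integrable (fun x => (btBox ε (x - a) + btBox δ (x - a)) * B)
      (gaussianReal 0 s.toNNReal) := ((bt_box_int hε _).add (bt_box_int hδ _)).mul_const B
  have h2 := norm_integral_le_of_norm_le hI (Eventually.of_forall hpt)
  rw [Real.norm_eq_abs] at h2
  refine h2.trans ?_
  rw [integral_mul_const, integral_add (bt_box_int hε _) (bt_box_int hδ _)]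
  have h3 := bt_gauss_le hs hε a
  have h4 := bt_gauss_le hs hδ a
  calc _ ≤ (s ^ (-(1 / 2) : ℝ) + s ^ (-(1 / 2) : ℝ)) * B := by gcongr
    _ = _ := by rw [hB]; ring

noncomputable def btKer (t q x : ℝ) : ℝ≥0∞ :=
  (Ioc 0 t).indicator (fun x => ENNReal.ofReal (x ^ q)) x

lemma btKer_meas (t q : ℝ) : Measurable (btKer t q) :=
  Measurable.indicator (by fun_prop) measurableSet_Ioc

lemma btKer_fin {t q : ℝ} (ht : 0 < t) (hq : -1 < q) : ∫⁻ x, btKer t q x < ∞ := by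
  have h := (intervalIntegral.intervalIntegrable_rpow' (a := 0) (b := t) hq)
  rw [intervalIntegrable_iff_integrableOn_Ioc_of_le ht.le] at h
  unfold btKer
  rw [lintegral_indicator measurableSet_Ioc]
  exact h.lintegral_lt_top

noncomputable def btK (t : ℝ) (p : ℝ × ℝ) : ℝ≥0∞ :=
  btKer t (-(3 / 4)) (p.2 - p.1) * btKer t (-(1 / 2)) p.1
    + btKer t (-(3 / 4)) (p.1 - p.2) * btKer t (-(1 / 2)) p.2

lemma btK_fin {t : ℝ} (ht : 0 < t) :
    ∫⁻ p, btK t p ∂((volume : Measure ℝ).prod volume) < ∞ := by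
  have m1 : Measurable fun p : ℝ × ℝ =>
      btKer t (-(3 / 4)) (p.2 - p.1) * btKer t (-(1 / 2)) p.1 :=
    ((btKer_meas _ _).comp (by fun_prop)).mul ((btKer_meas _ _).comp (by fun_prop))
  have m2 : Measurable fun p : ℝ × ℝ =>
      btKer t (-(3 / 4)) (p.1 - p.2) * btKer t (-(1 / 2)) p.2 :=
    ((btKer_meas _ _).comp (by fun_prop)).mul ((btKer_meas _ _).comp (by fun_prop))
  have f1 := btKer_fin (q := -(3 / 4)) ht (by norm_num)
  have f2 := btKer_fin (q := -(1 / 2)) ht (by norm_num)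
  unfold btK
  rw [lintegral_add_left m1, lintegral_prod _ m1.aemeasurable,
    lintegral_prod_symm _ m2.aemeasurable]
  have e : ∀ x : ℝ, ∫⁻ y, btKer t (-(3 / 4)) (y - x) * btKer t (-(1 / 2)) x
      = (∫⁻ y, btKer t (-(3 / 4)) y) * btKer t (-(1 / 2)) x := by
    intro x
    have hm : Measurable fun y => btKer t (-(3 / 4)) (y - x) :=
      (btKer_meas _ _).comp (measurable_id.sub_const x)
    rw [lintegral_mul_const _ hm,
      lintegral_sub_right_eq_self (fun y => btKer t (-(3 / 4)) y) x]
  simp only [e]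
  rw [lintegral_const_mul _ (btKer_meas _ _)]
  exact ENNReal.add_lt_top.2 ⟨ENNReal.mul_lt_top f1 f2, ENNReal.mul_lt_top f1 f2⟩

lemma bt_cov_K {Ω : Type*} [MeasurableSpace Ω] {P : Measure Ω} {W : ℝ → Ω → ℝ}
    (hW : IsBrownianMotion P W) {t s u ε δ : ℝ} (hs : s ∈ Ioc 0 t) (hu : u ∈ Ioc 0 t)
    (hsu : s ≠ u) (hε : 0 < ε) (hδ : 0 < δ) (a : ℝ) :
    ENNReal.ofReal |∫ ω, btDiff ε δ (W s ω - a) * btDiff ε δ (W u ω - a) ∂P|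
      ≤ ENNReal.ofReal (2 * Real.sqrt |ε - δ|) * btK t (s, u) := by
  have key : ∀ s u : ℝ, s ∈ Ioc 0 t → u ∈ Ioc 0 t → s < u →
      ENNReal.ofReal |∫ ω, btDiff ε δ (W s ω - a) * btDiff ε δ (W u ω - a) ∂P|
      ≤ ENNReal.ofReal (2 * Real.sqrt |ε - δ|) *
        (btKer t (-(3 / 4)) (u - s) * btKer t (-(1 / 2)) s) := by
    intro s u hs hu h
    refine (ENNReal.ofReal_le_ofReal (bt_cov hW hs.1 h hε hδ a)).trans ?_
    have hd : u - s ∈ Ioc 0 t := ⟨by linarith, by linarith [hs.1, hu.2]⟩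
    have : 0 < u - s := hd.1
    rw [btKer, btKer, indicator_of_mem hs, indicator_of_mem hd, ← ENNReal.ofReal_mul (by positivity),
      ← ENNReal.ofReal_mul (by positivity)]
  rcases lt_or_gt_of_ne hsu with h | h
  · refine (key s u hs hu h).trans ?_
    gcongr
    exact le_self_add
  · have := key u s hu hs h
    simp only [mul_comm (btDiff ε δ (W u _ - a))] at this
    refine this.trans ?_
    gcongr
    exact le_add_self

noncomputable def btA {Ω : Type*} (W : ℝ → Ω → ℝ) (t a ε : ℝ) (ω : Ω) : ℝ :=
  ∫ s in Ioc 0 t, btBox ε (W s ω - a)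

lemma bt_second {Ω : Type*} [MeasurableSpace Ω] {P : Measure Ω} {W : ℝ → Ω → ℝ}
    (hW : IsBrownianMotion P W) (hc : ∀ ω, Continuous fun s => W s ω)
    {t ε δ : ℝ} (hε : 0 < ε) (hδ : 0 < δ) (a : ℝ) :
    ∫⁻ ω, ENNReal.ofReal ((btA W t a ε ω - btA W t a δ ω) ^ 2) ∂P
      ≤ ENNReal.ofReal (2 * Real.sqrt |ε - δ|) *
        ∫⁻ p, btK t p ∂((volume : Measure ℝ).prod volume) := by
  have := hW.isProb
  have hWm : Measurable (Function.uncurry W) :=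
    measurable_uncurry_of_continuous_of_measurable hc hW.meas
  set μ : Measure ℝ := volume.restrict (Ioc 0 t) with hμ
  set C : ℝ := 1 / (2 * ε) + 1 / (2 * δ) with hC
  have hC0 : 0 ≤ C := by positivity
  have e0 : ∀ ω, btA W t a ε ω - btA W t a δ ω = ∫ s, btDiff ε δ (W s ω - a) ∂μ := by
    intro ω
    have i : ∀ ε : ℝ, 0 < ε → Integrable (fun s => btBox ε (W s ω - a)) μ := by
      intro ε hε
      refine Integrable.of_bound (C := 1 / (2 * ε)) ?_ (Eventually.of_forall fun z => ?_)
      · exact ((btBox_meas ε).comp ((hc ω).measurable.sub_const a)).aestronglyMeasurable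
      · rw [Real.norm_eq_abs, abs_of_nonneg (btBox_nonneg hε _)]
        exact btBox_le hε _
    unfold btA btDiff
    rw [integral_sub (i ε hε) (i δ hδ)]
  have e1 : ∀ ω, (btA W t a ε ω - btA W t a δ ω) ^ 2
      = ∫ p, btDiff ε δ (W p.1 ω - a) * btDiff ε δ (W p.2 ω - a) ∂(μ.prod μ) := by
    intro ω
    rw [e0, sq, ← integral_prod_mul]
  have hG : Measurable (fun q : Ω × (ℝ × ℝ) =>
      btDiff ε δ (W q.2.1 q.1 - a) * btDiff ε δ (W q.2.2 q.1 - a)) := by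
    have a1 : Measurable fun q : Ω × (ℝ × ℝ) => W q.2.1 q.1 :=
      hWm.comp (measurable_snd.fst.prodMk measurable_fst)
    have a2 : Measurable fun q : Ω × (ℝ × ℝ) => W q.2.2 q.1 :=
      hWm.comp (measurable_snd.snd.prodMk measurable_fst)
    exact ((btDiff_meas ε δ).comp (a1.sub_const a)).mul
      ((btDiff_meas ε δ).comp (a2.sub_const a))
  have hGi : Integrable (Function.uncurry fun (ω : Ω) (p : ℝ × ℝ) =>
      btDiff ε δ (W p.1 ω - a) * btDiff ε δ (W p.2 ω - a)) (P.prod (μ.prod μ)) := by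
    refine Integrable.of_bound (C := C * C) hG.aestronglyMeasurable
      (Eventually.of_forall fun q => ?_)
    simp only [Function.uncurry]
    rw [norm_mul]
    exact mul_le_mul (btDiff_le' hε hδ _) (btDiff_le' hε hδ _) (norm_nonneg _) hC0
  have hI : Integrable (fun ω => (btA W t a ε ω - btA W t a δ ω) ^ 2) P := by
    simp only [e1]
    exact hGi.integral_prod_left
  rw [← ofReal_integral_eq_lintegral_ofReal hI (Eventually.of_forall fun ω => sq_nonneg _)]
  simp only [e1]
  rw [integral_integral_swap hGi]
  refine (ENNReal.ofReal_le_ofReal (le_abs_self _)).trans ?_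
  rw [← Real.norm_eq_abs, ofReal_norm]
  refine (enorm_integral_le_lintegral_enorm _).trans ?_
  rw [← lintegral_const_mul' _ _ ENNReal.ofReal_ne_top]
  have hne : ∀ᵐ p ∂(μ.prod μ), p.1 ≠ p.2 := by
    have hms : MeasurableSet {p : ℝ × ℝ | p.1 ≠ p.2} :=
      (measurableSet_eq_fun measurable_fst measurable_snd).compl
    rw [Measure.ae_prod_iff_ae_ae hms]
    refine Eventually.of_forall fun x => ?_
    have : ∀ᵐ y ∂μ, y ≠ x := by
      exact ae_restrict_of_ae (Measure.ae_ne volume x)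
    filter_upwards [this] with y hy using hy.symm
  have hmem : ∀ᵐ p ∂(μ.prod μ), p ∈ Ioc 0 t ×ˢ Ioc 0 t := by
    rw [hμ, Measure.prod_restrict]
    exact ae_restrict_mem (measurableSet_Ioc.prod measurableSet_Ioc)
  calc _ ≤ ∫⁻ p, ENNReal.ofReal (2 * Real.sqrt |ε - δ|) * btK t p ∂(μ.prod μ) := by
        refine lintegral_mono_ae ?_
        filter_upwards [hne, hmem] with p h1 h2
        rw [← ofReal_norm, Real.norm_eq_abs]
        exact bt_cov_K hW h2.1 h2.2 h1 hε hδ a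
    _ ≤ _ := by
        rw [hμ, Measure.prod_restrict]
        exact lintegral_mono' Measure.restrict_le_self le_rfl

lemma btA_meas {Ω : Type*} [MeasurableSpace Ω] {P : Measure Ω} {W : ℝ → Ω → ℝ}
    (hW : IsBrownianMotion P W) (hc : ∀ ω, Continuous fun s => W s ω) (t a ε : ℝ) :
    Measurable (btA W t a ε) := by
  have hWm : Measurable (Function.uncurry W) :=
    measurable_uncurry_of_continuous_of_measurable hc hW.meas
  have : StronglyMeasurable (fun q : Ω × ℝ => btBox ε (W q.2 q.1 - a)) := by
    have a1 : Measurable fun q : Ω × ℝ => W q.2 q.1 :=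
      hWm.comp (measurable_snd.prodMk measurable_fst)
    exact ((btBox_meas ε).comp (a1.sub_const a)).stronglyMeasurable
  exact (this.integral_prod_right (ν := volume.restrict (Ioc 0 t))).measurable

lemma btA_eq {Ω : Type*} {W : ℝ → Ω → ℝ} (hc : ∀ ω, Continuous fun s => W s ω)
    (t a ε : ℝ) (ω : Ω) :
    btA W t a ε ω = (1 / (2 * ε)) *
      (volume {s : ℝ | s ∈ Icc (0 : ℝ) t ∧ |W s ω - a| ≤ ε}).toReal := by
  have hm : MeasurableSet {s : ℝ | |W s ω - a| ≤ ε} :=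
    measurableSet_le ((hc ω).measurable.sub_const a).abs measurable_const
  have e : ∀ s, btBox ε (W s ω - a)
      = {s : ℝ | |W s ω - a| ≤ ε}.indicator (fun _ => 1 / (2 * ε)) s := by
    intro s
    simp only [btBox, indicator, mem_Icc, mem_ofPred_eq, abs_le]
  unfold btA
  simp only [e]
  rw [← integral_Icc_eq_integral_Ioc, integral_indicator hm, Measure.restrict_restrict hm,
    setIntegral_const, smul_eq_mul, mul_comm, Measure.real]
  congr 3
  ext s
  simp [and_comm]

lemma bt_det (m : ℝ → ℝ) (hm : Monotone m) (hm0 : ∀ x, 0 ≤ m x) (L : ℝ)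
    (h : Tendsto (fun n : ℕ => 1 / (2 * (1 / (n : ℝ) ^ 8)) * m (1 / (n : ℝ) ^ 8)) atTop (nhds L)) :
    Tendsto (fun ε : ℝ => 1 / (2 * ε) * m ε) (nhdsWithin 0 (Ioi 0)) (nhds L) := by
  set A : ℝ → ℝ := fun ε => 1 / (2 * ε) * m ε with hA
  have hx : Tendsto (fun ε : ℝ => ε ^ (-(1 / 8) : ℝ)) (nhdsWithin 0 (Ioi 0)) atTop :=
    tendsto_rpow_neg_nhdsGT_zero (by norm_num)
  have hN : Tendsto (fun ε : ℝ => ⌊ε ^ (-(1 / 8) : ℝ)⌋₊) (nhdsWithin 0 (Ioi 0)) atTop :=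
    tendsto_nat_floor_atTop.comp hx
  have hq : Tendsto (fun n : ℕ => ((n : ℝ) / ((n : ℝ) + 1)) ^ 8) atTop (nhds 1) := by
    simpa using (tendsto_natCast_div_add_atTop (1 : ℝ)).pow 8
  have hup : Tendsto (fun n : ℕ => A (1 / (n : ℝ) ^ 8) * (((n : ℝ) / ((n : ℝ) + 1)) ^ 8)⁻¹)
      atTop (nhds L) := by
    simpa [hA] using Tendsto.mul h (hq.inv₀ one_ne_zero)
  have hlo : Tendsto (fun n : ℕ => A (1 / ((n : ℝ) + 1) ^ 8) * ((n : ℝ) / ((n : ℝ) + 1)) ^ 8)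
      atTop (nhds L) := by
    have h' := (tendsto_add_atTop_iff_nat 1).2 h
    simp only [Nat.cast_add, Nat.cast_one] at h'
    simpa [hA] using Tendsto.mul h' hq
  have hev : ∀ᶠ ε in nhdsWithin (0 : ℝ) (Ioi 0), 0 < ε ∧ 1 ≤ ⌊ε ^ (-(1 / 8) : ℝ)⌋₊ :=
    (eventually_mem_nhdsWithin).and (hN.eventually_ge_atTop 1)
  have hb : ∀ ε : ℝ, 0 < ε → 1 ≤ ⌊ε ^ (-(1 / 8) : ℝ)⌋₊ →
      1 / ((⌊ε ^ (-(1 / 8) : ℝ)⌋₊ : ℝ) + 1) ^ 8 ≤ ε ∧ ε ≤ 1 / (⌊ε ^ (-(1 / 8) : ℝ)⌋₊ : ℝ) ^ 8 := by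
    intro ε hε hn
    set x := ε ^ (-(1 / 8) : ℝ) with hxd
    have hx0 : 0 < x := by positivity
    have hxe : ε = 1 / x ^ 8 := by
      rw [hxd, ← Real.rpow_natCast, ← Real.rpow_mul hε.le]
      norm_num
      rw [Real.rpow_neg_one, inv_inv]
    have h1 : (⌊x⌋₊ : ℝ) ≤ x := Nat.floor_le hx0.le
    have h2 : x < (⌊x⌋₊ : ℝ) + 1 := Nat.lt_floor_add_one x
    have h3 : (0 : ℝ) < ⌊x⌋₊ := by exact_mod_cast hn
    constructor
    · rw [hxe]
      exact one_div_le_one_div_of_le (by positivity) (by gcongr)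
    · calc ε = 1 / x ^ 8 := hxe
        _ ≤ _ := one_div_le_one_div_of_le (by positivity) (by gcongr)
  refine tendsto_of_tendsto_of_tendsto_of_le_of_le' (hlo.comp hN) (hup.comp hN) ?_ ?_
  · filter_upwards [hev] with ε ⟨hε, hn⟩
    obtain ⟨h1, h2⟩ := hb ε hε hn
    have h3 : (0 : ℝ) < ⌊ε ^ (-(1 / 8) : ℝ)⌋₊ := by exact_mod_cast hn
    simp only [Function.comp, hA]
    set N : ℝ := (⌊ε ^ (-(1 / 8) : ℝ)⌋₊ : ℝ)
    have e : 1 / (2 * (1 / (N + 1) ^ 8)) * m (1 / (N + 1) ^ 8) * (N / (N + 1)) ^ 8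
        = 1 / (2 * (1 / N ^ 8)) * m (1 / (N + 1) ^ 8) := by
      field_simp
    rw [e]
    refine mul_le_mul ?_ (hm h1) (hm0 _) (by positivity)
    exact one_div_le_one_div_of_le (by positivity) (by gcongr)
  · filter_upwards [hev] with ε ⟨hε, hn⟩
    obtain ⟨h1, h2⟩ := hb ε hε hn
    have h3 : (0 : ℝ) < ⌊ε ^ (-(1 / 8) : ℝ)⌋₊ := by exact_mod_cast hn
    simp only [Function.comp, hA]
    set N : ℝ := (⌊ε ^ (-(1 / 8) : ℝ)⌋₊ : ℝ)
    have e : 1 / (2 * (1 / N ^ 8)) * m (1 / N ^ 8) * ((N / (N + 1)) ^ 8)⁻¹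
        = 1 / (2 * (1 / (N + 1) ^ 8)) * m (1 / N ^ 8) := by
      field_simp
    rw [e]
    refine mul_le_mul ?_ (hm h2) (hm0 _) (by positivity)
    exact one_div_le_one_div_of_le (by positivity) (by gcongr)

lemma bt_conv {Ω : Type*} [MeasurableSpace Ω] {P : Measure Ω} {W : ℝ → Ω → ℝ}
    (hW : IsBrownianMotion P W) (hc : ∀ ω, Continuous fun s => W s ω)
    {t : ℝ} (ht : 0 < t) (a : ℝ) :
    ∀ᵐ ω ∂P, ∃ l, Tendsto (fun n : ℕ => btA W t a (1 / (n : ℝ) ^ 8) ω) atTop (nhds l) := by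
  set e : ℕ → ℝ := fun n => 1 / ((n : ℝ) + 1) ^ 8 with he
  have he0 : ∀ n, 0 < e n := fun n => by simp only [he]; positivity
  set K := ∫⁻ p, btK t p ∂((volume : Measure ℝ).prod volume) with hK
  have hKt : K < ∞ := btK_fin ht
  set D : ℕ → Ω → ℝ := fun n ω => btA W t a (e n) ω - btA W t a (e (n + 1)) ω with hD
  have hDm : ∀ n, Measurable (D n) := fun n =>
    (btA_meas hW hc t a _).sub (btA_meas hW hc t a _)
  have hsq : Summable fun n : ℕ => 1 / ((n : ℝ) + 1) ^ 2 := by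
    have := (summable_nat_add_iff 1).2 (Real.summable_one_div_nat_pow.2 (one_lt_two))
    simpa using this
  have hb : ∀ n : ℕ, ∫⁻ ω, ENNReal.ofReal (((n : ℝ) + 1) ^ 2 * D n ω ^ 2) ∂P
      ≤ ENNReal.ofReal (2 * (1 / ((n : ℝ) + 1) ^ 2)) * K := by
    intro n
    have h1 := bt_second hW hc (t := t) (he0 n) (he0 (n + 1)) a
    have h2 : Real.sqrt |e n - e (n + 1)| ≤ 1 / ((n : ℝ) + 1) ^ 4 := by
      apply Real.sqrt_le_iff.2
      refine ⟨by positivity, ?_⟩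
      have h3 : e (n + 1) ≤ e n := by
        simp only [he]
        apply one_div_le_one_div_of_le (by positivity)
        gcongr
        simp
      rw [abs_of_nonneg (by linarith)]
      have : (1 / ((n : ℝ) + 1) ^ 4) ^ 2 = e n := by
        simp only [he]; field_simp
      rw [this]; linarith [he0 (n + 1)]
    have h4 : (fun ω => ENNReal.ofReal (((n : ℝ) + 1) ^ 2 * D n ω ^ 2))
        = fun ω => ENNReal.ofReal (((n : ℝ) + 1) ^ 2) * ENNReal.ofReal (D n ω ^ 2) := by
      ext ω; rw [ENNReal.ofReal_mul (by positivity)]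
    rw [h4, lintegral_const_mul' _ _ ENNReal.ofReal_ne_top]
    calc _ ≤ ENNReal.ofReal (((n : ℝ) + 1) ^ 2) *
          (ENNReal.ofReal (2 * (1 / ((n : ℝ) + 1) ^ 4)) * K) := by
          refine mul_le_mul_right (h1.trans ?_) _
          gcongr
      _ = _ := by
          rw [← mul_assoc, ← ENNReal.ofReal_mul (by positivity)]
          congr 2
          field_simp
  have hfin : ∫⁻ ω, ∑' n : ℕ, ENNReal.ofReal (((n : ℝ) + 1) ^ 2 * D n ω ^ 2) ∂P < ∞ := by
    rw [lintegral_tsum (fun n => by have := hDm n; fun_prop)]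
    refine (ENNReal.tsum_le_tsum hb).trans_lt ?_
    rw [ENNReal.tsum_mul_right, ← ENNReal.ofReal_tsum_of_nonneg (fun n => by positivity)
      (hsq.mul_left 2)]
    exact ENNReal.mul_lt_top ENNReal.ofReal_lt_top hKt
  have hae := ae_lt_top (Measurable.tsum fun n => by have := hDm n; fun_prop) hfin.ne
  filter_upwards [hae] with ω hω
  have hs1 : Summable fun n : ℕ => ((n : ℝ) + 1) ^ 2 * D n ω ^ 2 := by
    have := ENNReal.summable_toReal hω.ne
    refine this.congr fun n => ?_
    rw [ENNReal.toReal_ofReal (by positivity)]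
  have hs2 : Summable fun n : ℕ => dist (btA W t a (e n) ω) (btA W t a (e n.succ) ω) := by
    refine Summable.of_nonneg_of_le (fun n => dist_nonneg) (fun n => ?_) (hsq.add hs1)
    rw [Real.dist_eq]
    change |D n ω| ≤ _
    set d := |D n ω|
    rw [← sq_abs (D n ω)]
    have hp : (0 : ℝ) < (n : ℝ) + 1 := by positivity
    have h5 : 0 ≤ (1 / ((n : ℝ) + 1) - ((n : ℝ) + 1) * d) ^ 2 := sq_nonneg _
    have h6 : (1 / ((n : ℝ) + 1) - ((n : ℝ) + 1) * d) ^ 2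
        = 1 / ((n : ℝ) + 1) ^ 2 + ((n : ℝ) + 1) ^ 2 * d ^ 2 - 2 * d := by
      field_simp
      ring
    have : 0 ≤ d := abs_nonneg _
    linarith
  obtain ⟨l, hl⟩ := cauchySeq_tendsto_of_complete (cauchySeq_of_summable_dist hs2)
  refine ⟨l, (tendsto_add_atTop_iff_nat 1).1 ?_⟩
  simpa [he] using hl

lemma bt_main {Ω : Type*} [MeasurableSpace Ω] (P : Measure Ω) (W : ℝ → Ω → ℝ)
    (hW : IsBrownianMotion P W) (hc : ∀ ω, Continuous fun s => W s ω)
    (t : ℝ) (ht : 0 < t) (a : ℝ) :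
    ∃ L : Ω → ℝ, Measurable L ∧ (∀ ω, 0 ≤ L ω) ∧
      ∀ᵐ ω ∂P,
        Tendsto
          (fun ε : ℝ =>
            (1 / (2 * ε)) *
              (volume {s : ℝ | s ∈ Icc (0 : ℝ) t ∧ |W s ω - a| ≤ ε}).toReal)
          (nhdsWithin 0 (Ioi 0)) (nhds (L ω)) := by
  obtain ⟨L, hLm, hL⟩ := measurable_limit_of_tendsto_metrizable_ae
    (fun n : ℕ => (btA_meas hW hc t a (1 / (n : ℝ) ^ 8)).aemeasurable (μ := P)) (bt_conv hW hc ht a)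
  refine ⟨fun ω => max (L ω) 0, hLm.max measurable_const, fun ω => le_max_right _ _, ?_⟩
  filter_upwards [hL] with ω hω
  have hnn : 0 ≤ L ω := by
    refine ge_of_tendsto' hω fun n => ?_
    rw [btA_eq hc]; positivity
  rw [max_eq_left hnn]
  refine bt_det (fun ε => (volume {s : ℝ | s ∈ Icc (0 : ℝ) t ∧ |W s ω - a| ≤ ε}).toReal) ?_
    (fun _ => ENNReal.toReal_nonneg) _ ?_
  · intro x y hxy
    refine ENNReal.toReal_mono ?_ (measure_mono fun s hs => ⟨hs.1, hs.2.trans hxy⟩)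
    refine ((measure_mono (t := Icc 0 t) fun s hs => hs.1).trans_lt ?_).ne
    simp
  · simpa only [btA_eq hc] using hω

/-- For every fixed `t > 0` and level `a`, the limit
`L_t(a) = lim_{ε→0+} (1/(2ε)) λ{ s ∈ [0,t] : |W_s − a| ≤ ε }` exists almost surely
and defines a nonnegative, almost surely finite random variable. -/
theorem brownian_local_time_limit_exists
    {Ω : Type*} [MeasurableSpace Ω] (P : Measure Ω) (W : ℝ → Ω → ℝ)
    (hW : IsBrownianMotion P W) (t : ℝ) (ht : 0 < t) (a : ℝ) :
    ∃ L : Ω → ℝ, Measurable L ∧ (∀ ω, 0 ≤ L ω) ∧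
      ∀ᵐ ω ∂P,
        Tendsto
          (fun ε : ℝ =>
            (1 / (2 * ε)) *
              (volume {s : ℝ | s ∈ Icc (0 : ℝ) t ∧ |W s ω - a| ≤ ε}).toReal)
          (nhdsWithin 0 (Ioi 0)) (nhds (L ω)) := by
  obtain ⟨N, hN, hNm, hN0⟩ := exists_measurable_superset_of_null (ae_iff.1 hW.cont)
  classical
  set V : ℝ → Ω → ℝ := fun s => N.piecewise (fun _ => 0) (W s) with hV
  have hVW : ∀ᵐ ω ∂P, ∀ s, V s ω = W s ω := by
    have : ∀ᵐ ω ∂P, ω ∉ N := measure_eq_zero_iff_ae_notMem.1 hN0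
    filter_upwards [this] with ω hω s
    simp [hV, hω]
  have hVc : ∀ ω, Continuous fun s => V s ω := by
    intro ω
    by_cases hω : ω ∈ N
    · simpa [hV, hω] using continuous_const
    · have : Continuous fun s => W s ω := by
        by_contra h
        exact hω (hN h)
      simpa [hV, hω] using this
  have hVB : IsBrownianMotion P V := by
    refine ⟨hW.isProb, fun ω => ?_, fun s => ?_, Eventually.of_forall hVc, fun s u hs hu => ?_,
      fun n τ hτ h0 => ?_⟩
    · by_cases hω : ω ∈ N <;> simp [hV, hω, hW.init]
    · exact Measurable.piecewise hNm measurable_const (hW.meas s)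
    · rw [← hW.incr_law s u hs hu]
      refine Measure.map_congr ?_
      filter_upwards [hVW] with ω hω
      rw [hω, hω]
    · refine (hW.indep_incr n τ hτ h0).congr fun i => ?_
      filter_upwards [hVW] with ω hω
      rw [hω, hω]
  obtain ⟨L, hLm, hL0, hL⟩ := bt_main P V hVB hVc t ht a
  refine ⟨L, hLm, hL0, ?_⟩
  filter_upwards [hL, hVW] with ω h1 h2
  simpa only [h2] using h1
end

section
/- Let W = (W_t)_{t≥0} be a standard one-dimensional Brownian motion on a probability space (Ω, F, P). There exists a random field L : [0,∞) × ℝ × Ω → [0,∞) such that, for almost every ω, the map (t,x) ↦ L_t(x,ω) is jointly continuous, and such that almost surely, for every t ≥ 0 and every Borel set B ⊆ ℝ, ∫_0^t 1_B(W_s) ds = ∫_B L_t(x) dx (Trotter's existence theorem for Brownian local time as an occupation density). -/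
open MeasureTheory ProbabilityTheory Filter Set
open scoped ENNReal NNReal

/-- power of an integral -/
lemma pow_integral_aux (h : ℝ → ℝ) (r : ℝ) (hh : IntervalIntegrable h volume 0 r) (n : ℕ) :
    (∫ s in (0:ℝ)..r, h s) ^ (n + 1)
      = (n + 1) * ∫ s in (0:ℝ)..r, h s * (∫ u in s..r, h u) ^ n := by
  set f : ℝ → ℝ := fun s => ∫ u in r..s, h u with hf
  have hfac : AbsolutelyContinuousOnInterval f 0 r :=
    hh.absolutelyContinuousOnInterval_intervalIntegral (by simp)
  have hpow : ∀ m : ℕ, AbsolutelyContinuousOnInterval (fun s => f s ^ (m + 1)) 0 r := by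
    intro m
    induction m with
    | zero => simpa using hfac
    | succ m ih =>
      have := ih.fun_mul hfac
      simpa [pow_succ] using this
  have h1 := (hpow n).integral_deriv_eq_sub
  have h2 : ∫ s in (0:ℝ)..r, deriv (fun s => f s ^ (n + 1)) s
      = ∫ s in (0:ℝ)..r, (-1) ^ n * ((n + 1) * (h s * (∫ u in s..r, h u) ^ n)) := by
    apply intervalIntegral.integral_congr_ae
    filter_upwards [hh.ae_hasDerivAt_integral] with s hs hs'
    have hd := hs (uIoc_subset_uIcc hs') r (by simp)
    have := (hd.pow (n + 1)).deriv
    have e : (fun s => f s ^ (n + 1)) = (fun x ↦ ∫ t in r..x, h t) ^ (n + 1) := by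
      ext; simp [f]
    rw [e, this, intervalIntegral.integral_symm s r, neg_pow]
    push_cast
    ring_nf
  rw [h2, intervalIntegral.integral_const_mul, intervalIntegral.integral_const_mul] at h1
  have h3 : f r = 0 := by simp [f]
  have h4 : f 0 = - ∫ s in (0:ℝ)..r, h s := by simp only [f]; rw [intervalIntegral.integral_symm]
  rw [h3, h4, neg_pow (∫ s in (0:ℝ)..r, h s)] at h1
  have h5 : ((-1:ℝ) ^ n) * (-1) ^ n = 1 := by rw [← mul_pow]; simp
  calc (∫ s in (0:ℝ)..r, h s) ^ (n + 1)
      = ((-1:ℝ) ^ n * (-1) ^ n) * (∫ s in (0:ℝ)..r, h s) ^ (n + 1) := by rw [h5, one_mul]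
    _ = (-1:ℝ)^n * (0 ^ (n+1) - (-1) ^ (n+1) * (∫ s in (0:ℝ)..r, h s) ^ (n + 1)) := by
        rw [zero_pow (by simp), pow_succ (-1:ℝ)]; ring
    _ = _ := by rw [← h1, ← mul_assoc, h5, one_mul]

/-- Fubini under independence -/
lemma indep_fubini {Ω β : Type*} [MeasurableSpace Ω] [MeasurableSpace β] (P : Measure Ω)
    [IsProbabilityMeasure P]
    (Z : Ω → ℝ) (hZ : Measurable Z) (G : Ω → β) (hG : Measurable G)
    (hind : IndepFun Z G P) (F : ℝ × β → ℝ) (hF : Measurable F)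
    (C : ℝ) (hC : ∀ p, |F p| ≤ C) :
    ∫ ω, F (Z ω, G ω) ∂P = ∫ y, ∫ ω, F (y, G ω) ∂P ∂(P.map Z) := by
  have hmap := (indepFun_iff_map_prod_eq_prod_map_map hZ.aemeasurable
    hG.aemeasurable).1 hind
  have e1 : ∫ ω, F (Z ω, G ω) ∂P = ∫ p, F p ∂(Measure.map (fun ω => (Z ω, G ω)) P) := by
    rw [integral_map (hZ.prodMk hG).aemeasurable hF.stronglyMeasurable.aestronglyMeasurable]
  have hp : IsProbabilityMeasure (P.map Z) := Measure.isProbabilityMeasure_map hZ.aemeasurable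
  have hp2 : IsProbabilityMeasure (P.map G) :=
    Measure.isProbabilityMeasure_map hG.aemeasurable
  rw [e1, hmap, integral_prod]
  · apply integral_congr_ae
    refine ae_of_all _ fun y => ?_
    simp only
    rw [integral_map hG.aemeasurable]
    exact (hF.comp measurable_prodMk_left).stronglyMeasurable.aestronglyMeasurable
  · refine Integrable.of_bound hF.stronglyMeasurable.aestronglyMeasurable C (ae_of_all _ ?_)
    exact hC

noncomputable def Xf {Ω : Type*} (g : ℝ → ℝ) (B : ℝ≥0 → Ω → ℝ) (r x : ℝ) (ω : Ω) : ℝ :=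
  ∫ u in (0:ℝ)..r, g (x + B u.toNNReal ω)

noncomputable def pk (s y : ℝ) : ℝ := gaussianPDFReal 0 s.toNNReal y

noncomputable def Kf (g : ℝ → ℝ) : ℕ → ℝ → ℝ → ℝ
  | 0 => fun _ _ => 1
  | (n+1) => fun r x => (n+1) * ∫ s in Ioc 0 r, ∫ y, g y * Kf g n (r - s) y * pk s (y - x)

lemma measurable_pk : Measurable (fun q : ℝ × ℝ => pk q.1 q.2) := by
  unfold pk
  simp only [gaussianPDFReal_def]
  fun_prop

lemma measurable_Kf (g : ℝ → ℝ) (hg : Measurable g) (n : ℕ) :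
    Measurable (fun q : ℝ × ℝ => Kf g n q.1 q.2) := by
  induction n with
  | zero => simp only [Kf]; fun_prop
  | succ n ih =>
    simp only [Kf]
    apply Measurable.const_mul
    have e : ∀ q : ℝ × ℝ, ∫ s in Ioc 0 q.1, ∫ y, g y * Kf g n (q.1 - s) y * pk s (y - q.2)
        = ∫ s, (if 0 < s ∧ s ≤ q.1 then ∫ y, g y * Kf g n (q.1 - s) y * pk s (y - q.2) else 0) := by
      intro q
      rw [← integral_indicator measurableSet_Ioc]
      congr 1
      ext s
      simp only [indicator, mem_Ioc]
    simp only [e]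
    have h1 : Measurable (fun a : ((ℝ × ℝ) × ℝ) × ℝ =>
        g a.2 * Kf g n (a.1.1.1 - a.1.2) a.2 * pk a.1.2 (a.2 - a.1.1.2)) := by
      have e1 : Measurable (fun a : ((ℝ × ℝ) × ℝ) × ℝ => Kf g n (a.1.1.1 - a.1.2) a.2) :=
        ih.comp (by fun_prop : Measurable (fun a : ((ℝ × ℝ) × ℝ) × ℝ => (a.1.1.1 - a.1.2, a.2)))
      have e2 : Measurable (fun a : ((ℝ × ℝ) × ℝ) × ℝ => pk a.1.2 (a.2 - a.1.1.2)) :=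
        measurable_pk.comp
          (by fun_prop : Measurable (fun a : ((ℝ × ℝ) × ℝ) × ℝ => (a.1.2, a.2 - a.1.1.2)))
      exact ((hg.comp measurable_snd).mul e1).mul e2
    have h2 := h1.stronglyMeasurable.integral_prod_right' (ν := (volume : Measure ℝ))
    have h3 : Measurable (fun a : (ℝ × ℝ) × ℝ => (if 0 < a.2 ∧ a.2 ≤ a.1.1 then
        ∫ y, g y * Kf g n (a.1.1 - a.2) y * pk a.2 (y - a.1.2) else 0)) := by
      refine Measurable.ite ?_ h2.measurable measurable_const
      exact (measurableSet_lt measurable_const measurable_snd).inter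
        (measurableSet_le measurable_snd (by fun_prop))
    exact (h3.stronglyMeasurable.integral_prod_right' (ν := (volume : Measure ℝ))).measurable

lemma measurable_path {Ω : Type*} [MeasurableSpace Ω] (g : ℝ → ℝ) (hg : Measurable g)
    (B : ℝ≥0 → Ω → ℝ) (hB : ∀ t, Measurable (B t)) (hc : ∀ ω, Continuous fun t => B t ω) :
    Measurable (fun q : (ℝ × ℝ) × Ω => g (q.1.2 + B q.1.1.toNNReal q.2)) := by
  have h1 : Measurable (Function.uncurry B) :=
    measurable_uncurry_of_continuous_of_measurable hc hB
  have h2 : Measurable (fun q : (ℝ × ℝ) × Ω => B q.1.1.toNNReal q.2) :=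
    h1.comp (by fun_prop : Measurable (fun q : (ℝ × ℝ) × Ω => (q.1.1.toNNReal, q.2)))
  exact hg.comp (by fun_prop)

lemma measurable_Xf {Ω : Type*} [MeasurableSpace Ω] (g : ℝ → ℝ) (hg : Measurable g)
    (B : ℝ≥0 → Ω → ℝ) (hB : ∀ t, Measurable (B t)) (hc : ∀ ω, Continuous fun t => B t ω)
    (r : ℝ) (hr : 0 ≤ r) :
    Measurable (fun q : ℝ × Ω => Xf g B r q.1 q.2) := by
  unfold Xf
  simp only [intervalIntegral.integral_of_le hr]
  have h1 := measurable_path g hg B hB hc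
  have h2 : Measurable (fun a : (ℝ × Ω) × ℝ => g (a.1.1 + B a.2.toNNReal a.1.2)) :=
    h1.comp (by fun_prop : Measurable (fun a : (ℝ × Ω) × ℝ => ((a.2, a.1.1), a.1.2)))
  exact (h2.stronglyMeasurable.integral_prod_right' (ν := volume.restrict (Ioc 0 r))).measurable

lemma path_integrable {Ω : Type*} [MeasurableSpace Ω] (g : ℝ → ℝ) (hg : Measurable g)
    (M : ℝ) (hM : ∀ y, |g y| ≤ M)
    (B : ℝ≥0 → Ω → ℝ) (hc : ∀ ω, Continuous fun t => B t ω)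
    (a b x : ℝ) (ω : Ω) :
    IntervalIntegrable (fun u : ℝ => g (x + B u.toNNReal ω)) volume a b := by
  have hm : Measurable (fun u : ℝ => g (x + B u.toNNReal ω)) := by
    have := hc ω
    exact hg.comp (by fun_prop)
  rw [intervalIntegrable_iff]
  exact Measure.integrableOn_of_bounded (by simp) hm.aestronglyMeasurable (M := M) (ae_of_all _ fun u => hM _)

lemma Xf_bound {Ω : Type*} (g : ℝ → ℝ)
    (M : ℝ) (hM : ∀ y, |g y| ≤ M) (B : ℝ≥0 → Ω → ℝ) (r x : ℝ) (hr : 0 ≤ r) (ω : Ω) :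
    |Xf g B r x ω| ≤ M * r := by
  have := intervalIntegral.norm_integral_le_of_norm_le_const (a := 0) (b := r) (C := M)
    (f := fun u : ℝ => g (x + B u.toNNReal ω)) (fun u _ => hM _)
  simpa [Xf, abs_of_nonneg hr] using this

lemma Xf_step {Ω : Type*} (g : ℝ → ℝ)
    (B : ℝ≥0 → Ω → ℝ) (r s x : ℝ) (hs : 0 ≤ s) (hr : s ≤ r) (ω : Ω) :
    ∫ u in s..r, g (x + B u.toNNReal ω)
      = Xf g (fun t ω => B (s.toNNReal + t) ω - B s.toNNReal ω) (r - s) (x + B s.toNNReal ω) ω := by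
  unfold Xf
  have := intervalIntegral.integral_comp_add_left (a := 0) (b := r - s)
    (fun u : ℝ => g (x + B u.toNNReal ω)) s
  simp only [add_zero, add_sub_cancel] at this
  rw [← this]
  apply intervalIntegral.integral_congr
  intro u hu
  rw [uIcc_of_le (by linarith)] at hu
  simp only
  rw [Real.toNNReal_add hs hu.1]
  congr 1
  ring

lemma measurable_Ff {Ω : Type*} [MeasurableSpace Ω] (g : ℝ → ℝ) (hg : Measurable g)
    (B : ℝ≥0 → Ω → ℝ) (hB : ∀ t, Measurable (B t)) (hc : ∀ ω, Continuous fun t => B t ω)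
    (r x : ℝ) (hr : 0 ≤ r) (n : ℕ) :
    Measurable (fun q : ℝ × Ω => g (x + q.1) * (Xf g B r (x + q.1) q.2) ^ n) := by
  have h1 := measurable_Xf g hg B hB hc r hr
  have h2 : Measurable (fun q : ℝ × Ω => (x + q.1, q.2)) := by fun_prop
  have h4 : Measurable (fun q : ℝ × Ω => g (x + q.1)) := hg.comp (by fun_prop)
  exact h4.mul ((h1.comp h2).pow_const n)

lemma indep_lift {Ω γ β : Type*} [MeasurableSpace Ω] [mβ : MeasurableSpace β] (P : Measure Ω)
    [mγ : MeasurableSpace γ] (ψ : γ → β) (hγ : mγ = MeasurableSpace.comap ψ mβ) (G : Ω → γ)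
    (Z : Ω → ℝ) (h : IndepFun Z (ψ ∘ G) P) : IndepFun Z G P := by
  have e : MeasurableSpace.comap G mγ = MeasurableSpace.comap (ψ ∘ G) mβ := by
    rw [hγ, MeasurableSpace.comap_comp]
  rw [IndepFun_iff_Indep] at h ⊢
  rw [e]
  exact h

theorem moment_eq {Ω : Type*} [MeasurableSpace Ω] (P : Measure Ω) [IsProbabilityMeasure P]
    (g : ℝ → ℝ) (hg : Measurable g) (M : ℝ) (hM : ∀ y, |g y| ≤ M) (n : ℕ) :
    ∀ (B : ℝ≥0 → Ω → ℝ), IsPreBrownianReal B P → (∀ t, Measurable (B t)) →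
      (∀ ω, Continuous fun t => B t ω) → ∀ r x : ℝ, 0 ≤ r →
      ∫ ω, (Xf g B r x ω) ^ n ∂P = Kf g n r x := by
  induction n with
  | zero => intro B _ _ _ r x hr; simp [Kf]
  | succ n ih =>
    intro B hB hBm hBc r x hr
    have hM0 : 0 ≤ M := (abs_nonneg _).trans (hM 0)
    have step : ∀ s, 0 < s → s ≤ r →
        ∫ ω, g (x + B s.toNNReal ω) * (∫ u in s..r, g (x + B u.toNNReal ω)) ^ n ∂P
          = ∫ y, g y * Kf g n (r - s) y * pk s (y - x) := by
      intro s hs hsr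
      set Y : ℝ≥0 → Ω → ℝ := fun t ω => B (s.toNNReal + t) ω - B s.toNNReal ω with hY
      have hYm : ∀ t, Measurable (Y t) := fun t => (hBm _).sub (hBm _)
      have hYc : ∀ ω, Continuous fun t => Y t ω := by
        intro ω
        have := hBc ω
        simp only [hY]
        fun_prop
      have hYB : IsPreBrownianReal Y P := hB.shift _
      have hind : IndepFun (fun ω t => Y t ω) (B s.toNNReal) P := by
        have := hB.indepFun_shift s.toNNReal
        exact this.comp measurable_id
          (measurable_pi_apply (⟨s.toNNReal, by simp⟩ : Set.Iic s.toNNReal))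
      have hi2 : @IndepFun Ω ℝ Ω _ _ (MeasurableSpace.comap (fun ω t => Y t ω) inferInstance)
          (B s.toNNReal) id P := by
        exact @indep_lift Ω Ω (ℝ≥0 → ℝ) _ _ P
          (MeasurableSpace.comap (fun ω t => Y t ω) inferInstance) (fun ω t => Y t ω) rfl id
          (B s.toNNReal) hind.symm
      have hYm2 : ∀ t, Measurable[MeasurableSpace.comap (fun ω t => Y t ω) inferInstance] (Y t) :=
        fun t u hu => ⟨(fun f : ℝ≥0 → ℝ => f t) ⁻¹' u, measurable_pi_apply t hu, rfl⟩
      set F : ℝ × Ω → ℝ := fun q => g (x + q.1) * (Xf g Y (r - s) (x + q.1) q.2) ^ n with hF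
      have hFm : @Measurable _ _ (@Prod.instMeasurableSpace ℝ Ω _
          (MeasurableSpace.comap (fun ω t => Y t ω) inferInstance)) _ F := by
        exact @measurable_Ff Ω (MeasurableSpace.comap (fun ω t => Y t ω) inferInstance)
          g hg Y hYm2 hYc (r - s) x (by linarith) n
      have hid : @Measurable Ω Ω _ (MeasurableSpace.comap (fun ω t => Y t ω) inferInstance) id :=
        fun t ht => (measurable_pi_lambda _ hYm).comap_le t ht
      have key := @indep_fubini Ω Ω _ (MeasurableSpace.comap (fun ω t => Y t ω) inferInstance) P _
        (B s.toNNReal) (hBm _) id hid hi2 F hFm (M * (M * (r - s)) ^ n) (by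
          intro q
          simp only [hF]
          rw [abs_mul, abs_pow]
          gcongr
          · exact hM _
          · exact Xf_bound g M hM Y _ _ (by linarith) _)
      have e1 : ∀ ω, g (x + B s.toNNReal ω) * (∫ u in s..r, g (x + B u.toNNReal ω)) ^ n
          = F (B s.toNNReal ω, id ω) := by
        intro ω
        rw [Xf_step g B r s x hs.le hsr ω]
        rfl
      simp only [e1]
      rw [key]
      have e2 : ∀ y, ∫ ω, F (y, id ω) ∂P = g (x + y) * Kf g n (r - s) (x + y) := by
        intro y
        simp only [hF, id]
        rw [integral_const_mul, ih Y hYB hYm hYc (r - s) (x + y) (by linarith)]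
      simp only [e2]
      rw [(hB.hasLaw_eval s.toNNReal).map_eq]
      rw [integral_gaussianReal_eq_integral_smul (by simpa using hs)]
      rw [← integral_add_left_eq_self (fun y => g y * Kf g n (r - s) y * pk s (y - x)) x]
      apply integral_congr_ae
      refine ae_of_all _ fun y => ?_
      simp only [pk, smul_eq_mul, add_sub_cancel_left]
      ring
    simp only [Kf]
    have e0 : ∀ ω, (Xf g B r x ω) ^ (n + 1) = (n + 1) * ∫ s in Ioc 0 r,
        g (x + B s.toNNReal ω) * (∫ u in s..r, g (x + B u.toNNReal ω)) ^ n := by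
      intro ω
      rw [← intervalIntegral.integral_of_le hr]
      exact pow_integral_aux _ r (path_integrable g hg M hM B hBc 0 r x ω) n
    simp only [e0]
    rw [integral_const_mul]
    congr 1
    have hX0 : Measurable (fun q : ℝ × Ω => Xf g B q.1 x q.2) := by
      have hcont : ∀ ω, Continuous (fun t => Xf g B t x ω) := by
        intro ω
        exact intervalIntegral.continuous_primitive
          (fun a b => path_integrable g hg M hM B hBc a b x ω) 0
      have hpos : Measurable (fun q : ℝ≥0 × Ω => Xf g B q.1 x q.2) :=
        measurable_uncurry_of_continuous_of_measurable
          (u := fun (t : ℝ≥0) (ω : Ω) => Xf g B t x ω)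
          (fun ω => (hcont ω).comp NNReal.continuous_coe)
          (fun t => (measurable_Xf g hg B hBm hBc t t.2).comp measurable_prodMk_left)
      have hneg : ∀ (t : ℝ) (ω : Ω), Xf g B t x ω = Xf g B t.toNNReal x ω
          - (if t < 0 then (-t) * g (x + B 0 ω) else 0) := by
        intro t ω
        by_cases ht : t < 0
        · have : t.toNNReal = 0 := Real.toNNReal_of_nonpos ht.le
          rw [if_pos ht, this]
          have e : ∫ u in (0:ℝ)..t, g (x + B u.toNNReal ω) = ∫ u in (0:ℝ)..t, g (x + B 0 ω) := by
            apply intervalIntegral.integral_congr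
            intro u hu
            rw [uIcc_of_ge ht.le] at hu
            simp [Real.toNNReal_of_nonpos hu.2]
          simp [Xf, e]
        · push Not at ht
          rw [if_neg (by linarith), Real.coe_toNNReal t ht, sub_zero]
      have e3 : (fun q : ℝ × Ω => Xf g B q.1 x q.2) = fun q : ℝ × Ω => Xf g B q.1.toNNReal x q.2
          - (if q.1 < 0 then (-q.1) * g (x + B 0 q.2) else 0) := by
        ext q; exact hneg q.1 q.2
      rw [e3]
      refine Measurable.sub (hpos.comp (by fun_prop : Measurable
        (fun q : ℝ × Ω => (q.1.toNNReal, q.2)))) (Measurable.ite ?_ ?_ measurable_const)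
      · exact measurableSet_lt measurable_fst measurable_const
      · have := hBm 0
        exact measurable_fst.neg.mul (hg.comp ((this.comp measurable_snd).const_add x))
    have hmeas : Measurable (fun q : Ω × ℝ => g (x + B q.2.toNNReal q.1) *
        (∫ u in q.2..r, g (x + B u.toNNReal q.1)) ^ n) := by
      have h1 : Measurable (fun q : Ω × ℝ => g (x + B q.2.toNNReal q.1)) :=
        (measurable_path g hg B hBm hBc).comp
          (by fun_prop : Measurable (fun q : Ω × ℝ => ((q.2, x), q.1)))
      have h2 : (fun q : Ω × ℝ => ∫ u in q.2..r, g (x + B u.toNNReal q.1))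
          = fun q : Ω × ℝ => Xf g B r x q.1 - Xf g B q.2 x q.1 := by
        ext q
        have hi := fun a b => path_integrable g hg M hM B hBc a b x q.1
        exact (intervalIntegral.integral_interval_sub_left (hi 0 r) (hi 0 q.2)).symm
      have h3 : Measurable (fun q : Ω × ℝ => ∫ u in q.2..r, g (x + B u.toNNReal q.1)) := by
        rw [h2]
        refine Measurable.sub ?_ ?_
        · exact hX0.comp (by fun_prop : Measurable (fun q : Ω × ℝ => (r, q.1)))
        · exact hX0.comp (by fun_prop : Measurable (fun q : Ω × ℝ => (q.2, q.1)))
      exact h1.mul (h3.pow_const n)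
    rw [integral_integral_swap]
    · apply setIntegral_congr_fun measurableSet_Ioc
      intro s hs
      exact step s hs.1 hs.2
    · have hbd : ∀ q : Ω × ℝ, q.2 ∈ Ioc 0 r → ‖g (x + B q.2.toNNReal q.1) *
        (∫ u in q.2..r, g (x + B u.toNNReal q.1)) ^ n‖ ≤ M * (M * r) ^ n := by
        intro q hq
        rw [Real.norm_eq_abs, abs_mul, abs_pow]
        have := intervalIntegral.norm_integral_le_of_norm_le_const (a := q.2) (b := r) (C := M)
          (f := fun u : ℝ => g (x + B u.toNNReal q.1)) (fun u _ => hM _)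
        have h2 : |∫ u in q.2..r, g (x + B u.toNNReal q.1)| ≤ M * r := by
          refine this.trans ?_
          gcongr
          rw [abs_of_nonneg (by linarith [hq.2])]
          linarith [hq.1]
        gcongr
        exact hM _
      refine Integrable.of_bound hmeas.aestronglyMeasurable (M * (M * r) ^ n) ?_
      have hq : ∀ᵐ q ∂(P.prod (volume.restrict (Ioc 0 r))), q.2 ∈ Ioc 0 r := by
        have : ∀ᵐ s ∂(volume.restrict (Ioc 0 r)), s ∈ Ioc (0:ℝ) r :=
          ae_restrict_mem measurableSet_Ioc
        exact Measure.quasiMeasurePreserving_snd.ae this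
      filter_upwards [hq] with q hq
      exact hbd q hq

lemma exp_sq_lip (a b : ℝ) : |Real.exp (-a^2) - Real.exp (-b^2)| ≤ |a - b| := by
  have hd : ∀ x : ℝ, HasDerivAt (fun a : ℝ => Real.exp (-a^2)) (Real.exp (-x^2) * (-(2 * x))) x := by
    intro x
    have := ((hasDerivAt_pow 2 x).neg).exp
    simpa using this
  have hb : ∀ x ∈ (univ : Set ℝ), ‖Real.exp (-x^2) * (-(2 * x))‖ ≤ 1 := by
    intro x _
    rw [norm_mul, Real.norm_eq_abs, Real.norm_eq_abs, abs_of_pos (Real.exp_pos _), Real.exp_neg]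
    rw [inv_mul_le_iff₀ (Real.exp_pos _), mul_one, abs_neg]
    have h1 := Real.add_one_le_exp (x^2)
    have h2 : |2 * x| ≤ x^2 + 1 := by
      rw [abs_le]; constructor <;> nlinarith [sq_nonneg (x+1), sq_nonneg (x-1)]
    linarith
  have := convex_univ.norm_image_sub_le_of_norm_hasDerivWithin_le
    (fun x _ => (hd x).hasDerivWithinAt) hb (mem_univ b) (mem_univ a)
  simpa using this

lemma exp_sq_holder (a b : ℝ) : |Real.exp (-a^2) - Real.exp (-b^2)| ≤ √|a - b| := by
  have h1 := exp_sq_lip a b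
  have h2 : |Real.exp (-a^2) - Real.exp (-b^2)| ≤ 1 := by
    have ha : Real.exp (-a^2) ≤ 1 := Real.exp_le_one_iff.2 (by nlinarith)
    have hb : Real.exp (-b^2) ≤ 1 := Real.exp_le_one_iff.2 (by nlinarith)
    rw [abs_le]; constructor <;> linarith [Real.exp_pos (-a^2), Real.exp_pos (-b^2)]
  apply Real.le_sqrt_of_sq_le
  nlinarith [abs_nonneg (Real.exp (-a^2) - Real.exp (-b^2)), abs_nonneg (a-b)]

lemma pk_eq (s y : ℝ) (hs : 0 < s) :
    pk s y = (√(2 * Real.pi * s))⁻¹ * Real.exp (-(y / √(2 * s))^2) := by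
  simp only [pk, gaussianPDFReal_def, Real.coe_toNNReal s hs.le, sub_zero]
  rw [div_pow, Real.sq_sqrt (by positivity), neg_div]

lemma inv_sqrt_le (s : ℝ) (hs : 0 < s) : (√(2 * Real.pi * s))⁻¹ ≤ s ^ (-(1/2) : ℝ) := by
  rw [Real.rpow_neg hs.le, ← Real.sqrt_eq_rpow]
  gcongr
  nlinarith [Real.pi_gt_three]

lemma pk_le (T s y : ℝ) (hT : 1 ≤ T) (hs : 0 < s) (hsT : s ≤ T) :
    |pk s y| ≤ T * s ^ (-(3/4) : ℝ) := by
  rw [pk_eq s y hs, abs_of_nonneg (by positivity)]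
  have h1 := inv_sqrt_le s hs
  have h2 : Real.exp (-(y / √(2 * s))^2) ≤ 1 := Real.exp_le_one_iff.2 (by nlinarith [sq_nonneg (y / √(2 * s))])
  have h3 : s ^ (-(1/2) : ℝ) = s ^ (1/4 : ℝ) * s ^ (-(3/4) : ℝ) := by
    rw [← Real.rpow_add hs]; norm_num
  have h4 : s ^ (1/4 : ℝ) ≤ T := by
    calc s ^ (1/4 : ℝ) ≤ T ^ (1/4 : ℝ) := by gcongr
      _ ≤ T ^ (1:ℝ) := Real.rpow_le_rpow_of_exponent_le hT (by norm_num)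
      _ = T := Real.rpow_one T
  calc _ ≤ s ^ (-(1/2) : ℝ) * 1 := by gcongr
    _ = s ^ (1/4 : ℝ) * s ^ (-(3/4) : ℝ) := by rw [mul_one, h3]
    _ ≤ _ := by gcongr

lemma pk_holder (T s y z : ℝ) (hT : 1 ≤ T) (hs : 0 < s) :
    |pk s y - pk s z| ≤ T * s ^ (-(3/4) : ℝ) * √|y - z| := by
  rw [pk_eq s y hs, pk_eq s z hs, ← mul_sub, abs_mul, abs_of_nonneg (by positivity)]
  have h1 := inv_sqrt_le s hs
  have h2 := exp_sq_holder (y / √(2 * s)) (z / √(2 * s))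
  have h3 : √|y / √(2 * s) - z / √(2 * s)| ≤ s ^ (-(1/4) : ℝ) * √|y - z| := by
    rw [← sub_div, abs_div, Real.sqrt_div (abs_nonneg _), div_eq_inv_mul]
    gcongr
    rw [Real.rpow_neg hs.le, abs_of_nonneg (Real.sqrt_nonneg _)]
    gcongr
    have : s ^ (1/4 : ℝ) = √(√s) := by
      rw [Real.sqrt_eq_rpow, Real.sqrt_eq_rpow, ← Real.rpow_mul hs.le]; norm_num
    rw [this]
    gcongr
    linarith
  have h4 : s ^ (-(3/4) : ℝ) = s ^ (-(1/2) : ℝ) * s ^ (-(1/4) : ℝ) := by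
    rw [← Real.rpow_add hs]; norm_num
  calc _ ≤ s ^ (-(1/2) : ℝ) * (s ^ (-(1/4) : ℝ) * √|y - z|) := by gcongr; exact h2.trans h3
    _ = 1 * s ^ (-(3/4) : ℝ) * √|y - z| := by rw [h4]; ring
    _ ≤ _ := by gcongr

noncomputable def gd (e a y : ℝ) : ℝ :=
  e⁻¹ * ((Ico a (a+e)).indicator (fun _ => 1) y - (Ico (a+e) (a+e+e)).indicator (fun _ => 1) y)

lemma measurable_gd (e a : ℝ) : Measurable (gd e a) := by
  unfold gd
  exact ((measurable_const.indicator measurableSet_Ico).sub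
    (measurable_const.indicator measurableSet_Ico)).const_mul _

lemma gd_bound (e a : ℝ) (he : 0 < e) (y : ℝ) : |gd e a y| ≤ e⁻¹ := by
  unfold gd
  rw [abs_mul, abs_of_pos (inv_pos.2 he)]
  refine mul_le_of_le_one_right (by positivity) ?_
  by_cases h1 : y ∈ Ico a (a+e) <;> by_cases h2 : y ∈ Ico (a+e) (a+e+e) <;> simp [h1, h2]

lemma bdd_integrableOn_Ico (F : ℝ → ℝ) (hF : Measurable F) (B : ℝ) (hB : ∀ y, |F y| ≤ B) (a b : ℝ) :
    IntegrableOn F (Ico a b) :=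
  Measure.integrableOn_of_bounded (M := B) (by simp) hF.aestronglyMeasurable
    (ae_of_all _ hB)

lemma gd_mul_eq (e a : ℝ) (F : ℝ → ℝ) : (fun y => gd e a y * F y) = fun y =>
    e⁻¹ * ((Ico a (a+e)).indicator F y - (Ico (a+e) (a+e+e)).indicator F y) := by
  ext y
  unfold gd
  by_cases h1 : y ∈ Ico a (a+e) <;> by_cases h2 : y ∈ Ico (a+e) (a+e+e) <;> simp [h1, h2]

lemma gd_mul_integrable (e a : ℝ) (F : ℝ → ℝ) (hF : Measurable F) (B : ℝ) (hB : ∀ y, |F y| ≤ B) :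
    Integrable (fun y => gd e a y * F y) := by
  rw [gd_mul_eq]
  exact (((bdd_integrableOn_Ico F hF B hB _ _).integrable_indicator measurableSet_Ico).sub
    ((bdd_integrableOn_Ico F hF B hB _ _).integrable_indicator measurableSet_Ico)).const_mul _

lemma gd_int_le (e a : ℝ) (he : 0 < e) (F : ℝ → ℝ) (hF : Measurable F) (B : ℝ)
    (hB : ∀ y, |F y| ≤ B) (M : ℝ) (hM : ∀ y, |F y - F (y + e)| ≤ M) :
    |∫ y, gd e a y * F y| ≤ M := by
  rw [gd_mul_eq, integral_const_mul, integral_sub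
    ((bdd_integrableOn_Ico F hF B hB _ _).integrable_indicator measurableSet_Ico)
    ((bdd_integrableOn_Ico F hF B hB _ _).integrable_indicator measurableSet_Ico),
    integral_indicator measurableSet_Ico, integral_indicator measurableSet_Ico]
  have h1 : ∫ y in Ico (a+e) (a+e+e), F y = ∫ y in Ico a (a+e), F (y + e) := by
    rw [integral_Ico_eq_integral_Ioc, integral_Ico_eq_integral_Ioc,
      ← intervalIntegral.integral_of_le (by linarith), ← intervalIntegral.integral_of_le (by linarith)]
    rw [intervalIntegral.integral_comp_add_right]
  rw [h1, ← integral_sub (bdd_integrableOn_Ico F hF B hB _ _)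
    (bdd_integrableOn_Ico (fun y => F (y+e)) (hF.comp (by fun_prop)) B (fun y => hB _) _ _)]
  have h2 := norm_setIntegral_le_of_norm_le_const (μ := volume) (s := Ico a (a+e)) (C := M)
    (f := fun y => F y - F (y+e)) (by simp) (fun y _ => hM y)
  rw [Real.norm_eq_abs] at h2
  simp only [Real.volume_real_Ico] at h2
  rw [add_sub_cancel_left, max_eq_left he.le] at h2
  rw [abs_mul, abs_of_pos (inv_pos.2 he), inv_mul_le_iff₀ he]
  linarith

lemma kernel_integrable (T r : ℝ) : IntegrableOn (fun s : ℝ => T * s ^ (-(3/4) : ℝ)) (Ioc 0 r) := by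
  rcases le_or_gt r 0 with h | h
  · simp [Ioc_eq_empty (not_lt.2 h)]
  · have := (intervalIntegral.intervalIntegrable_rpow' (a := 0) (b := r) (r := (-(3/4):ℝ)) (by norm_num))
    rw [intervalIntegrable_iff_integrableOn_Ioc_of_le h.le] at this
    exact this.const_mul T

lemma measurable_inner (g : ℝ → ℝ) (hg : Measurable g) (n : ℕ) (r x : ℝ) :
    Measurable (fun s => ∫ y, g y * Kf g n (r - s) y * pk s (y - x)) := by
  have h1 : Measurable (fun a : ℝ × ℝ => g a.2 * Kf g n (r - a.1) a.2 * pk a.1 (a.2 - x)) := by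
    have e1 : Measurable (fun a : ℝ × ℝ => Kf g n (r - a.1) a.2) :=
      (measurable_Kf g hg n).comp (by fun_prop : Measurable (fun a : ℝ × ℝ => (r - a.1, a.2)))
    have e2 : Measurable (fun a : ℝ × ℝ => pk a.1 (a.2 - x)) :=
      measurable_pk.comp (by fun_prop : Measurable (fun a : ℝ × ℝ => (a.1, a.2 - x)))
    exact ((hg.comp measurable_snd).mul e1).mul e2
  exact (h1.stronglyMeasurable.integral_prod_right' (ν := (volume : Measure ℝ))).measurable

theorem Kf_bound (T : ℝ) (hT : 1 ≤ T) (n : ℕ) : ∃ C : ℝ, 0 ≤ C ∧ ∀ e a : ℝ, 0 < e → e ≤ 1 →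
    ∀ r, 0 ≤ r → r ≤ T → ∀ x z,
      |Kf (gd e a) n r x| ≤ C * (√e) ^ ((n+1)/2) ∧
      |Kf (gd e a) n r x - Kf (gd e a) n r z| ≤ C * (√e) ^ (n/2) * √|x - z| := by
  induction n with
  | zero => exact ⟨1, by norm_num, fun e a _ _ r _ _ x z => by simp [Kf]⟩
  | succ n ih =>
    obtain ⟨C, hC0, hC⟩ := ih
    set κ : ℝ → ℝ := fun s => T * s ^ (-(3/4) : ℝ) with hκ
    set c : ℝ := ∫ s in Ioc 0 T, κ s with hc
    have hκ0 : ∀ s, 0 < s → 0 ≤ κ s := fun s hs => by simp only [hκ]; positivity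
    have hc0 : 0 ≤ c := setIntegral_nonneg measurableSet_Ioc fun s hs => hκ0 s hs.1
    have hcr : ∀ r, r ≤ T → ∫ s in Ioc 0 r, κ s ≤ c := by
      intro r hr
      apply setIntegral_mono_set (kernel_integrable T T)
      · exact (ae_restrict_iff' measurableSet_Ioc).2 (ae_of_all _ fun s hs => hκ0 s hs.1)
      · exact (Ioc_subset_Ioc_right hr).eventuallyLE
    refine ⟨(n+1) * (2 * c * C), by positivity, ?_⟩
    intro e a he he1 r hr hrT x z
    set δ := √e with hδ
    have hδ0 : 0 ≤ δ := Real.sqrt_nonneg _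
    have hδ1 : δ ≤ 1 := Real.sqrt_le_one.2 he1
    set g := gd e a with hg
    have hgm : Measurable g := measurable_gd e a
    have hK := fun s (hs : s ∈ Ioc 0 r) => hC e a he he1 (r - s) (by linarith [hs.2]) (by linarith [hs.1])
    have hKm : ∀ s, Measurable (fun y => Kf g n (r - s) y) := fun s =>
      (measurable_Kf g hgm n).comp measurable_prodMk_left
    have hpm : ∀ s x, Measurable (fun y => pk s (y - x)) := fun s x =>
      measurable_pk.comp (by fun_prop : Measurable (fun y : ℝ => (s, y - x)))
    have hFm : ∀ s x, Measurable (fun y => Kf g n (r - s) y * pk s (y - x)) := fun s x =>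
      (hKm s).mul (hpm s x)
    have hFb : ∀ s ∈ Ioc 0 r, ∀ x y, |Kf g n (r - s) y * pk s (y - x)| ≤ C * δ ^ ((n+1)/2) * κ s := by
      intro s hs x y
      rw [abs_mul]
      have := (hK s hs y y).1
      have h2 := pk_le T s (y - x) hT hs.1 (hs.2.trans hrT)
      gcongr
    -- inner bound
    have hin : ∀ s ∈ Ioc 0 r, ∀ x, |∫ y, g y * Kf g n (r - s) y * pk s (y - x)|
        ≤ (2 * C * δ ^ (n/2 + 1)) * κ s := by
      intro s hs x
      simp only [mul_assoc (g _)]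
      refine gd_int_le e a he _ (hFm s x) _ (hFb s hs x) _ ?_
      intro y
      have b1 := (hK s hs y (y+e)).1
      have b2 := (hK s hs y (y+e)).2
      have p1 := pk_le T s (y + e - x) hT hs.1 (hs.2.trans hrT)
      have p2 := pk_holder T s (y - x) (y + e - x) hT hs.1
      have e1 : |y - (y + e)| = e := by rw [sub_add_cancel_left, abs_neg, abs_of_pos he]
      have e2 : |y - x - (y + e - x)| = e := by rw [sub_sub_sub_cancel_right, e1]
      rw [e1] at b2
      rw [e2] at p2
      have hpow : δ ^ ((n+1)/2) ≤ δ ^ (n/2) := pow_le_pow_of_le_one hδ0 hδ1 (by omega)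
      have k0 := hκ0 s hs.1
      calc |Kf g n (r - s) y * pk s (y - x) - Kf g n (r - s) (y + e) * pk s (y + e - x)|
          = |Kf g n (r - s) y * (pk s (y - x) - pk s (y + e - x)) +
            (Kf g n (r - s) y - Kf g n (r - s) (y + e)) * pk s (y + e - x)| := by ring_nf
        _ ≤ |Kf g n (r - s) y| * |pk s (y - x) - pk s (y + e - x)| +
            |Kf g n (r - s) y - Kf g n (r - s) (y + e)| * |pk s (y + e - x)| := by
            rw [← abs_mul, ← abs_mul]; exact abs_add_le _ _
        _ ≤ (C * δ ^ (n/2)) * (κ s * δ) + (C * δ ^ (n/2) * δ) * κ s := by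
            gcongr
            exact b1.trans (by gcongr)
        _ = (2 * C * δ ^ (n/2 + 1)) * κ s := by ring
    have hint : ∀ x, IntegrableOn (fun s => ∫ y, g y * Kf g n (r - s) y * pk s (y - x)) (Ioc 0 r) := by
      intro x
      refine Integrable.mono' ((kernel_integrable T r).const_mul (2 * C * δ ^ (n/2 + 1)))
        (measurable_inner g hgm n r x).aestronglyMeasurable ?_
      exact (ae_restrict_iff' measurableSet_Ioc).2 (ae_of_all _ fun s hs => hin s hs x)
    constructor
    · simp only [Kf]
      rw [abs_mul, abs_of_nonneg (by positivity : (0:ℝ) ≤ n + 1), mul_assoc ((n:ℝ)+1)]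
      gcongr
      have h1 := norm_integral_le_of_norm_le (μ := volume.restrict (Ioc 0 r))
        (f := fun s => ∫ y, g y * Kf g n (r - s) y * pk s (y - x))
        ((kernel_integrable T r).const_mul (2 * C * δ ^ (n/2 + 1)))
        ((ae_restrict_iff' measurableSet_Ioc).2 (ae_of_all _ fun s hs => hin s hs x))
      rw [integral_const_mul] at h1
      have e3 : (n + 1 + 1)/2 = n/2 + 1 := by omega
      rw [e3]
      calc _ ≤ 2 * C * δ ^ (n/2 + 1) * ∫ s in Ioc 0 r, κ s := h1
        _ ≤ 2 * C * δ ^ (n/2 + 1) * c := by gcongr; exact hcr r hrT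
        _ = _ := by ring
    · simp only [Kf]
      rw [← mul_sub, abs_mul, abs_of_nonneg (by positivity : (0:ℝ) ≤ n + 1), mul_assoc ((n:ℝ)+1),
        mul_assoc ((n:ℝ)+1)]
      gcongr
      rw [← integral_sub (hint x) (hint z)]
      have hd : ∀ s ∈ Ioc 0 r, ‖(∫ y, g y * Kf g n (r - s) y * pk s (y - x))
          - ∫ y, g y * Kf g n (r - s) y * pk s (y - z)‖
          ≤ (2 * C * δ ^ ((n + 1)/2) * √|x - z|) * κ s := by
        intro s hs
        simp only [mul_assoc (g _)]
        rw [← integral_sub (gd_mul_integrable e a _ (hFm s x) _ (hFb s hs x))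
          (gd_mul_integrable e a _ (hFm s z) _ (hFb s hs z))]
        simp only [hg, ← mul_sub, Real.norm_eq_abs]
        have hb : ∀ y, |Kf (gd e a) n (r - s) y * (pk s (y - x) - pk s (y - z))|
            ≤ C * δ ^ ((n + 1)/2) * (κ s * √|x - z|) := by
          intro y
          rw [abs_mul]
          have b1 := (hK s hs y y).1
          have p2 := pk_holder T s (y - x) (y - z) hT hs.1
          rw [sub_sub_sub_cancel_left, abs_sub_comm] at p2
          gcongr
          rw [abs_sub_comm z x] at p2
          rw [abs_sub_comm]
          exact p2
        have hm : Measurable (fun y => Kf (gd e a) n (r - s) y * (pk s (y - x) - pk s (y - z))) :=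
          (hKm s).mul ((hpm s x).sub (hpm s z))
        refine gd_int_le e a he _ hm _ hb _ ?_
        intro y
        have := hb y
        have h2 := hb (y + e)
        refine (abs_sub _ _).trans ?_
        linarith
      have h1 := norm_integral_le_of_norm_le (μ := volume.restrict (Ioc 0 r))
        ((kernel_integrable T r).const_mul (2 * C * δ ^ ((n + 1)/2) * √|x - z|))
        ((ae_restrict_iff' measurableSet_Ioc).2 (ae_of_all _ hd))
      rw [integral_const_mul] at h1
      calc _ ≤ 2 * C * δ ^ ((n+1)/2) * √|x - z| * ∫ s in Ioc 0 r, κ s := h1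
        _ ≤ 2 * C * δ ^ ((n+1)/2) * √|x - z| * c := by gcongr; exact hcr r hrT
        _ = _ := by ring

lemma ae_bound_of_geom {Ω : Type*} [MeasurableSpace Ω] (P : Measure Ω)
    (V : ℕ → Ω → ℝ) (hVm : ∀ j, Measurable (V j)) (hV0 : ∀ j ω, 0 ≤ V j ω)
    (hVi : ∀ j, Integrable (V j) P) (C q : ℝ) (hq0 : 0 ≤ q) (hq1 : q < 1)
    (hV : ∀ j, ∫ ω, V j ω ∂P ≤ C * q ^ j) :
    ∀ᵐ ω ∂P, ∃ S : ℝ, ∀ j, V j ω ≤ S := by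
  have hC : Summable (fun j => C * q ^ j) := (summable_geometric_of_lt_one hq0 hq1).mul_left C
  have hnn : ∀ j, 0 ≤ C * q ^ j := fun j => (integral_nonneg (hV0 j)).trans (hV j)
  have h1 : ∫⁻ ω, ∑' j, ENNReal.ofReal (V j ω) ∂P ≠ ∞ := by
    rw [lintegral_tsum (fun j => (hVm j).ennreal_ofReal.aemeasurable)]
    refine ne_top_of_le_ne_top hC.tsum_ofReal_ne_top (ENNReal.tsum_le_tsum fun j => ?_)
    rw [← ofReal_integral_eq_lintegral_ofReal (hVi j) (ae_of_all _ (hV0 j))]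
    exact ENNReal.ofReal_le_ofReal (hV j)
  have h2 := ae_lt_top' (Measurable.tsum fun j => (hVm j).ennreal_ofReal).aemeasurable h1
  filter_upwards [h2] with ω hω
  refine ⟨(∑' j, ENNReal.ofReal (V j ω)).toReal, fun j => ?_⟩
  rw [← ENNReal.ofReal_le_iff_le_toReal hω.ne]
  exact ENNReal.le_tsum j

noncomputable def Df {Ω : Type*} (B : ℝ≥0 → Ω → ℝ) (j : ℕ) (k : ℤ) (t : ℝ) (ω : Ω) : ℝ :=
  Xf (gd ((2^j)⁻¹) (k * (2^j)⁻¹)) B t 0 ω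

lemma Df_lip {Ω : Type*} [MeasurableSpace Ω] (B : ℝ≥0 → Ω → ℝ)
    (hBc : ∀ ω, Continuous fun t => B t ω) (j : ℕ) (k : ℤ) (t u : ℝ) (ω : Ω) :
    |Df B j k t ω - Df B j k u ω| ≤ 2^j * |t - u| := by
  unfold Df Xf
  have hi := fun a b => path_integrable (gd ((2^j)⁻¹) (k * (2^j)⁻¹)) (measurable_gd _ _) _
    (gd_bound _ _ (by positivity)) B hBc a b 0 ω
  rw [intervalIntegral.integral_interval_sub_left (hi 0 t) (hi 0 u)]
  have := intervalIntegral.norm_integral_le_of_norm_le_const (a := u) (b := t) (C := 2^j)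
          (f := fun s : ℝ => gd ((2^j)⁻¹) (k * (2^j)⁻¹) (0 + B s.toNNReal ω)) (fun s _ => by
            simpa using gd_bound ((2^j)⁻¹) (k * (2^j)⁻¹) (by positivity) (0 + B s.toNNReal ω))
  simpa using this

theorem star_bound {Ω : Type*} [MeasurableSpace Ω] (P : Measure Ω) [IsProbabilityMeasure P]
    (B : ℝ≥0 → Ω → ℝ) (hB : IsPreBrownianReal B P) (hBm : ∀ t, Measurable (B t))
    (hBc : ∀ ω, Continuous fun t => B t ω) :
    ∀ᵐ ω ∂P, ∀ N : ℕ, ∃ S : ℝ, ∀ (j : ℕ) (k : ℤ) (t : ℝ), |k| ≤ N * 2^j → 0 ≤ t → t ≤ N →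
      |Df B j k t ω| ≤ S * (99/100)^j := by
  rw [ae_all_iff]
  intro N
  obtain ⟨C, hC0, hC⟩ := Kf_bound (N + 1) (by simp) 16
  set ρ : ℝ := 99/100 with hρ
  set G : ℕ → Finset (ℤ × ℕ) := fun j =>
    (Finset.Icc (-(N*2^j):ℤ) (N*2^j)) ×ˢ Finset.range (N*4^j+1) with hG
  set V : ℕ → Ω → ℝ := fun j ω => ∑ p ∈ G j, (Df B j p.1 (p.2 / 4^j) ω / ρ^j)^16 with hV
  have hDm : ∀ j k t, 0 ≤ t → Measurable (fun ω => Df B j k t ω) := by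
    intro j k t ht
    exact (measurable_Xf _ (measurable_gd _ _) B hBm hBc t ht).comp
      (measurable_prodMk_left (x := (0:ℝ)))
  have hDb : ∀ j k t ω, 0 ≤ t → |Df B j k t ω| ≤ 2^j * t := by
    intro j k t ω ht
    have := Df_lip B hBc j k t 0 ω
    simpa [Df, Xf, abs_of_nonneg ht] using this
  have hDi : ∀ j k t, 0 ≤ t → Integrable (fun ω => (Df B j k t ω / ρ^j)^16) P := by
    intro j k t ht
    refine Integrable.of_bound (((hDm j k t ht).div_const _).pow_const _).aestronglyMeasurable
      ((2^j * t / ρ^j)^16) (ae_of_all _ fun ω => ?_)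
    rw [norm_pow, norm_div, Real.norm_eq_abs, Real.norm_eq_abs, abs_of_pos (by positivity : 0 < ρ^j)]
    gcongr
    exact hDb j k t ω ht
  have hDE : ∀ (j : ℕ) (k : ℤ) (t : ℝ), 0 ≤ t → t ≤ N → ∫ ω, (Df B j k t ω / ρ^j)^16 ∂P ≤ C * (1/16/ρ^16)^j := by
    intro j k t ht htN
    simp only [div_pow _ (ρ^j)]
    rw [integral_div]
    have h1 := moment_eq P (gd ((2^j)⁻¹) (k * (2^j)⁻¹)) (measurable_gd _ _) _
      (gd_bound _ _ (by positivity)) 16 B hB hBm hBc t 0 ht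
    have h2 := (hC ((2^j)⁻¹) (k * (2^j)⁻¹) (by positivity)
      (inv_le_one_of_one_le₀ (one_le_pow₀ (by norm_num))) t ht (by linarith) 0 0).1
    have h3 : (√((2^j:ℝ)⁻¹))^((16+1)/2) = (1/16:ℝ)^j := by
      have : (16+1)/2 = 2 * 4 := by norm_num
      rw [this, pow_mul, Real.sq_sqrt (by positivity), ← inv_pow, ← pow_mul, mul_comm, pow_mul]
      norm_num
    rw [h3, ← h1] at h2
    rw [div_pow (1/16:ℝ) (ρ^16), ← pow_mul, ← pow_mul, mul_comm 16 j, ← mul_div_assoc]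
    gcongr
    exact (le_abs_self _).trans h2
  have hmem : ∀ j, ∀ p ∈ G j, (0:ℝ) ≤ p.2 / 4^j ∧ (p.2:ℝ) / 4^j ≤ N := by
    intro j p hp
    simp only [hG, Finset.mem_product, Finset.mem_range] at hp
    refine ⟨by positivity, ?_⟩
    rw [div_le_iff₀ (by positivity)]
    exact_mod_cast Nat.lt_succ_iff.1 hp.2
  have hcard : ∀ j, ((G j).card : ℝ) ≤ (2*N+1)*(N+1) * 8^j := by
    intro j
    have : (G j).card = (2*N*2^j+1) * (N*4^j+1) := by
      simp only [hG, Finset.card_product, Int.card_Icc, Finset.card_range]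
      congr 1
      zify
      have h0 : (0:ℤ) ≤ N * 2^j := by positivity
      rw [Int.toNat_of_nonneg (by linarith)]
      ring
    rw [this]
    push_cast
    have e : (8:ℝ)^j = 2^j * 4^j := by rw [← mul_pow]; norm_num
    have h2 : (1:ℝ) ≤ 2^j := one_le_pow₀ (by norm_num)
    have h4 : (1:ℝ) ≤ 4^j := one_le_pow₀ (by norm_num)
    rw [e]
    calc _ ≤ ((2*N+1)*2^j : ℝ) * ((N+1)*4^j) := by gcongr <;> linarith
      _ = _ := by ring
  have hVm : ∀ j, Measurable (V j) := fun j => Finset.measurable_sum _ fun p hp =>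
      ((hDm j p.1 _ (hmem j p hp).1).div_const _).pow_const _
  have hV0 : ∀ j ω, 0 ≤ V j ω := fun j ω => Finset.sum_nonneg fun p _ => Even.pow_nonneg (by decide) _
  have hVi : ∀ j, Integrable (V j) P :=
    fun j => integrable_finsetSum _ fun p hp => hDi j p.1 _ (hmem j p hp).1
  have hVE : ∀ j, ∫ ω, V j ω ∂P ≤ ((2*N+1)*(N+1)*C) * (8 * (1/16/ρ^16))^j := by
    intro j
    have h1 : ∫ ω, V j ω ∂P = ∑ p ∈ G j, ∫ ω, (Df B j p.1 (p.2 / 4^j) ω / ρ^j)^16 ∂P :=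
      integral_finsetSum _ fun p hp => hDi j p.1 _ (hmem j p hp).1
    have h2 : ∑ p ∈ G j, ∫ ω, (Df B j p.1 (p.2 / 4^j) ω / ρ^j)^16 ∂P
        ≤ ∑ p ∈ G j, C * (1/16/ρ^16)^j :=
      Finset.sum_le_sum fun p hp => hDE j p.1 _ (hmem j p hp).1 (hmem j p hp).2
    rw [Finset.sum_const, nsmul_eq_mul] at h2
    rw [h1, mul_pow]
    have h3 : 0 ≤ C * (1/16/ρ^16)^j := by positivity
    calc _ ≤ _ := h2
      _ ≤ ((2*N+1)*(N+1) * 8^j) * (C * (1/16/ρ^16)^j) := mul_le_mul_of_nonneg_right (hcard j) h3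
      _ = _ := by ring
  have key := ae_bound_of_geom P V hVm hV0 hVi
    ((2*N+1)*(N+1)*C) (8 * (1/16/ρ^16)) (by positivity) (by rw [hρ]; norm_num) hVE
  filter_upwards [key] with ω ⟨S, hS⟩
  have hS0 : 0 ≤ max S 1 := by positivity
  refine ⟨max S 1 + 1, fun j k t hk ht htN => ?_⟩
  have ht4 : 0 ≤ t * 4^j := by positivity
  set i : ℕ := ⌊t * 4^j⌋₊ with hi
  have hp : (k, i) ∈ G j := by
    simp only [hG, Finset.mem_product, Finset.mem_range, Finset.mem_Icc]
    refine ⟨abs_le.1 hk, Nat.lt_succ_iff.2 ?_⟩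
    rw [hi]
    apply Nat.floor_le_of_le
    push_cast
    gcongr
  have h1 : (Df B j k (i / 4^j) ω / ρ^j)^16 ≤ S :=
    (Finset.single_le_sum (f := fun p : ℤ × ℕ => (Df B j p.1 (p.2 / 4^j) ω / ρ^j)^16)
      (fun p _ => Even.pow_nonneg (by decide) _) hp).trans (hS j)
  have hρj : 0 < ρ^j := by positivity
  have h2 : |Df B j k (i / 4^j) ω| ≤ max S 1 * ρ^j := by
    rw [← div_le_iff₀ hρj, ← abs_of_pos hρj, ← abs_div]
    refine le_of_pow_le_pow_left₀ (n := 16) (by norm_num) hS0 ?_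
    rw [Even.pow_abs (by decide)]
    calc _ ≤ S := h1
      _ ≤ (max S 1)^1 := by simp
      _ ≤ (max S 1)^16 := pow_le_pow_right₀ (le_max_right _ _) (by norm_num)
  have h3 := Df_lip B hBc j k t (i / 4^j) ω
  have h4 : |t - i / 4^j| ≤ (4^j)⁻¹ := by
    have a1 := Nat.floor_le ht4
    have a2 := Nat.lt_floor_add_one (t * 4^j)
    rw [← hi] at a1 a2
    have : t - i / 4^j = (t * 4^j - i) * (4^j)⁻¹ := by field_simp
    rw [this, abs_mul, abs_of_nonneg (by linarith), abs_of_pos (by positivity)]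
    refine mul_le_of_le_one_left (by positivity) (by linarith)
  have h5 : 2^j * |t - i / 4^j| ≤ ρ^j := by
    calc _ ≤ (2:ℝ)^j * (4^j)⁻¹ := by gcongr
      _ = (1/2)^j := by rw [← inv_pow, ← mul_pow]; norm_num
      _ ≤ ρ^j := by gcongr; rw [hρ]; norm_num
  have h6 : |Df B j k t ω| ≤ |Df B j k (i / 4^j) ω| + |Df B j k t ω - Df B j k (i / 4^j) ω| := by
    have := abs_add_le (Df B j k (i / 4^j) ω) (Df B j k t ω - Df B j k (i / 4^j) ω)
    simpa using this
  linarith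

lemma floor_half (y : ℝ) (j : ℕ) : ⌊y * 2^j⌋ = ⌊y * 2^(j+1)⌋ / 2 := by
  rw [Int.floor_eq_iff]
  set m := ⌊y * 2^(j+1)⌋ with hm
  have h1 := Int.floor_le (y * 2^(j+1))
  have h2 := Int.lt_floor_add_one (y * 2^(j+1))
  rw [← hm, pow_succ] at h1 h2
  have h3 : 2 * (m/2) ≤ m := by omega
  have h4 : m + 1 ≤ 2 * (m/2) + 2 := by omega
  have h3' : (2:ℝ) * ((m/2 : ℤ):ℝ) ≤ m := by exact_mod_cast h3
  have h4' : (m:ℝ) + 1 ≤ 2 * ((m/2 : ℤ):ℝ) + 2 := by exact_mod_cast h4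
  constructor <;> nlinarith

lemma floor_pow (y z : ℝ) (i d : ℕ) (h : ⌊y * 2^(i+d)⌋ = ⌊z * 2^(i+d)⌋) :
    ⌊y * 2^i⌋ = ⌊z * 2^i⌋ := by
  induction d with
  | zero => exact h
  | succ d ih =>
    apply ih
    rw [floor_half y, floor_half z]
    rw [← add_assoc] at h
    rw [h]

def cell (j : ℕ) (k : ℤ) : Set ℝ := {y | ⌊y * 2^j⌋ = k}

lemma mem_cell (j : ℕ) (k : ℤ) (y : ℝ) : y ∈ cell j k ↔ ⌊y * 2^j⌋ = k := Iff.rfl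

lemma cell_eq_Ico (j : ℕ) (k : ℤ) :
    cell j k = Ico (k * (2^j)⁻¹ : ℝ) (k * (2^j)⁻¹ + (2^j)⁻¹) := by
  ext y
  have h : (0:ℝ) < 2^j := by positivity
  rw [mem_cell, Int.floor_eq_iff, mem_Ico, ← add_one_mul, ← div_eq_mul_inv, ← div_eq_mul_inv,
    div_le_iff₀ h, lt_div_iff₀ h]

lemma measurableSet_cell (j : ℕ) (k : ℤ) : MeasurableSet (cell j k) := by
  rw [cell_eq_Ico]; exact measurableSet_Ico

lemma volume_cell (j : ℕ) (k : ℤ) : volume (cell j k) = ENNReal.ofReal ((2^j)⁻¹) := by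
  rw [cell_eq_Ico, Real.volume_Ico, add_sub_cancel_left]

lemma cell_split (j : ℕ) (k : ℤ) : cell j k = cell (j+1) (2*k) ∪ cell (j+1) (2*k+1) := by
  ext y
  rw [mem_union, mem_cell, mem_cell, mem_cell, floor_half]
  omega

lemma cell_disj (j : ℕ) (k l : ℤ) (h : k ≠ l) : Disjoint (cell j k) (cell j l) := by
  rw [Set.disjoint_left]
  intro y h1 h2
  exact h (h1.symm.trans h2)

noncomputable def ic (j : ℕ) (k : ℤ) (y : ℝ) : ℝ := (cell j k).indicator (fun _ => 1) y

lemma measurable_ic (j : ℕ) (k : ℤ) : Measurable (ic j k) :=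
  measurable_const.indicator (measurableSet_cell j k)

lemma ic_nonneg (j : ℕ) (k : ℤ) (y : ℝ) : 0 ≤ ic j k y := indicator_nonneg (by simp) _

lemma ic_le (j : ℕ) (k : ℤ) (y : ℝ) : ic j k y ≤ 1 := by
  unfold ic; by_cases h : y ∈ cell j k <;> simp [h]

lemma ic_split (j : ℕ) (k : ℤ) (y : ℝ) : ic j k y = ic (j+1) (2*k) y + ic (j+1) (2*k+1) y := by
  unfold ic
  rw [cell_split, indicator_union_of_disjoint (cell_disj _ _ _ (by omega))]

noncomputable def Ad (w : ℝ → ℝ) (j : ℕ) (k : ℤ) (t : ℝ) : ℝ :=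
  2^j * ∫ s in (0:ℝ)..t, ic j k (w s)

lemma ic_integrable (w : ℝ → ℝ) (hw : Continuous w) (j : ℕ) (k : ℤ) (a b : ℝ) :
    IntervalIntegrable (fun s => ic j k (w s)) volume a b := by
  rw [intervalIntegrable_iff]
  refine Measure.integrableOn_of_bounded (M := 1) (by simp)
    ((measurable_ic j k).comp hw.measurable).aestronglyMeasurable (ae_of_all _ fun s => ?_)
  rw [Real.norm_eq_abs, abs_of_nonneg (ic_nonneg _ _ _)]
  exact ic_le _ _ _

lemma Ad_split (w : ℝ → ℝ) (hw : Continuous w) (j : ℕ) (k : ℤ) (t : ℝ) :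
    Ad w j k t = (Ad w (j+1) (2*k) t + Ad w (j+1) (2*k+1) t) / 2 := by
  unfold Ad
  have : ∫ s in (0:ℝ)..t, ic j k (w s) = (∫ s in (0:ℝ)..t, ic (j+1) (2*k) (w s))
      + ∫ s in (0:ℝ)..t, ic (j+1) (2*k+1) (w s) := by
    rw [← intervalIntegral.integral_add (ic_integrable w hw _ _ _ _) (ic_integrable w hw _ _ _ _)]
    simp only [ic_split j k]
  rw [this]
  ring

lemma Ad_nonneg (w : ℝ → ℝ) (j : ℕ) (k : ℤ) (t : ℝ) (ht : 0 ≤ t) : 0 ≤ Ad w j k t := by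
  unfold Ad
  have := intervalIntegral.integral_nonneg (μ := volume) ht (fun s _ => ic_nonneg j k (w s))
  positivity

lemma Ad_lip (w : ℝ → ℝ) (hw : Continuous w) (j : ℕ) (k : ℤ) (t u : ℝ) :
    |Ad w j k t - Ad w j k u| ≤ 2^j * |t - u| := by
  unfold Ad
  rw [← mul_sub, intervalIntegral.integral_interval_sub_left (ic_integrable w hw _ _ _ _)
    (ic_integrable w hw _ _ _ _), abs_mul, abs_of_pos (by positivity : (0:ℝ) < 2^j)]
  refine mul_le_mul_of_nonneg_left ?_ (by positivity)
  have := intervalIntegral.norm_integral_le_of_norm_le_const (a := u) (b := t) (C := 1)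
    (f := fun s : ℝ => ic j k (w s)) (fun s _ => by
      rw [Real.norm_eq_abs, abs_of_nonneg (ic_nonneg _ _ _)]; exact ic_le _ _ _)
  simpa using this

noncomputable def fd (w : ℝ → ℝ) (j : ℕ) (t x : ℝ) : ℝ := Ad w j ⌊x * 2^j⌋ t

def StarB (w : ℝ → ℝ) : Prop := ∀ N : ℕ, ∃ S : ℝ, ∀ (j : ℕ) (k : ℤ) (t : ℝ), |k| ≤ N * 2^j → 0 ≤ t →
  t ≤ N → |Ad w j k t - Ad w j (k+1) t| ≤ S * (99/100)^j

lemma floor_abs_le (x : ℝ) (N j : ℕ) (hx : |x| ≤ N) : |⌊x * 2^j⌋| ≤ (N:ℤ) * 2^j := by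
  rw [abs_le] at hx ⊢
  have h : (0:ℝ) < 2^j := by positivity
  constructor
  · rw [Int.le_floor]; push_cast; nlinarith
  · have : (⌊x * 2^j⌋ : ℝ) ≤ N * 2^j := (Int.floor_le _).trans (by nlinarith)
    exact_mod_cast this

lemma fd_step (w : ℝ → ℝ) (hw : Continuous w) (N : ℕ) (S : ℝ)
    (hS : ∀ (j : ℕ) (k : ℤ) (t : ℝ), |k| ≤ N * 2^j → 0 ≤ t →
      t ≤ N → |Ad w j k t - Ad w j (k+1) t| ≤ S * (99/100)^j) (j : ℕ) (t x : ℝ) (ht : 0 ≤ t)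
    (htN : t ≤ N) (hx : |x| ≤ N) : |fd w j t x - fd w (j+1) t x| ≤ S * (99/100)^j := by
  unfold fd
  rw [Ad_split w hw]
  set k := ⌊x * 2^j⌋ with hk
  have hk' := floor_abs_le x N j hx
  rw [← hk] at hk'
  have h1 := hS (j+1) (2*k) t (by rw [abs_mul, pow_succ]; simp only [Nat.abs_ofNat]; linarith) ht htN
  have hS0 : 0 ≤ S := by
    have := (abs_nonneg _).trans (hS 0 0 t (by simp) ht htN)
    simpa using this
  have h2 : S * (99/100:ℝ)^(j+1) ≤ S * (99/100)^j := by
    gcongr ?_ * ?_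
    exact pow_le_pow_of_le_one (by norm_num) (by norm_num) (by omega)
  have h3 := h1.trans h2
  have hm : ⌊x * 2^(j+1)⌋ = 2*k ∨ ⌊x * 2^(j+1)⌋ = 2*k+1 := by
    have := floor_half x j
    omega
  rw [abs_le] at h3 ⊢
  rcases hm with hm | hm <;> rw [hm] <;> constructor <;> linarith [h3.1, h3.2, (abs_nonneg _).trans h1]

lemma fd_lim (w : ℝ → ℝ) (hw : Continuous w) (hst : StarB w) :
    ∃ l : ℝ → ℝ → ℝ, (∀ t x, 0 ≤ t → Tendsto (fun j => fd w j t x) atTop (nhds (l t x))) ∧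
      ∀ N : ℕ, ∃ S : ℝ, 0 ≤ S ∧ (∀ (j : ℕ) (k : ℤ) (t : ℝ), |k| ≤ N * 2^j → 0 ≤ t →
        t ≤ N → |Ad w j k t - Ad w j (k+1) t| ≤ S * (99/100)^j) ∧
        ∀ (j : ℕ) (t x : ℝ), 0 ≤ t → t ≤ N → |x| ≤ N → |fd w j t x - l t x| ≤ 100 * S * (99/100)^j := by
  have hex : ∀ t x, 0 ≤ t → ∃ a, Tendsto (fun j => fd w j t x) atTop (nhds a) := by
    intro t x ht
    obtain ⟨N, hN⟩ := exists_nat_ge (max t |x|)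
    obtain ⟨S, hS⟩ := hst N
    apply cauchySeq_tendsto_of_complete
    refine cauchySeq_of_le_geometric (99/100) S (by norm_num) fun j => ?_
    exact fd_step w hw N S hS j t x ht ((le_max_left _ _).trans hN) ((le_max_right _ _).trans hN)
  have hex2 : ∀ t x, ∃ a, 0 ≤ t → Tendsto (fun j => fd w j t x) atTop (nhds a) := by
    intro t x
    by_cases ht : 0 ≤ t
    · obtain ⟨a, ha⟩ := hex t x ht
      exact ⟨a, fun _ => ha⟩
    · exact ⟨0, fun h => absurd h ht⟩
  choose l hl using hex2
  refine ⟨l, hl, fun N => ?_⟩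
  obtain ⟨S, hS⟩ := hst N
  refine ⟨S, ?_, hS, ?_⟩
  · have := (abs_nonneg _).trans (hS 0 0 0 (by simp) le_rfl (by simp))
    simpa using this
  · intro j t x ht htN hx
    have := dist_le_of_le_geometric_of_tendsto (99/100) S (by norm_num)
      (fun j => fd_step w hw N S hS j t x ht htN hx) (hl t x ht) j
    rw [Real.dist_eq] at this
    refine this.trans (le_of_eq ?_)
    ring

lemma lim_cont (w : ℝ → ℝ) (hw : Continuous w) (l : ℝ → ℝ → ℝ)
    (hl : ∀ N : ℕ, ∃ S : ℝ, 0 ≤ S ∧ (∀ (j : ℕ) (k : ℤ) (t : ℝ), |k| ≤ N * 2^j → 0 ≤ t →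
        t ≤ N → |Ad w j k t - Ad w j (k+1) t| ≤ S * (99/100)^j) ∧
        ∀ (j : ℕ) (t x : ℝ), 0 ≤ t → t ≤ N → |x| ≤ N → |fd w j t x - l t x| ≤ 100 * S * (99/100)^j) :
    ContinuousOn (fun p : ℝ × ℝ => l p.1 p.2) (Ici 0 ×ˢ univ) := by
  rw [Metric.continuousOn_iff]
  rintro ⟨t0, x0⟩ ⟨ht0, -⟩ η hη
  simp only [mem_Ici] at ht0
  obtain ⟨N, hN⟩ := exists_nat_ge (max (t0 + 1) (|x0| + 1))
  have hN1 := (le_max_left _ _).trans hN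
  have hN2 := (le_max_right _ _).trans hN
  obtain ⟨S, hS0, hS, hSl⟩ := hl N
  have hlim : Tendsto (fun j : ℕ => 201 * S * (99/100:ℝ)^j) atTop (nhds 0) := by
    have := (tendsto_pow_atTop_nhds_zero_of_lt_one (r := (99/100:ℝ)) (by norm_num)
      (by norm_num)).const_mul (201 * S)
    simpa using this
  obtain ⟨j, hj⟩ := (hlim.eventually (gt_mem_nhds (half_pos hη))).exists
  have h2 : (0:ℝ) < 2^j := by positivity
  refine ⟨min 1 (min ((2^j)⁻¹) (η / 2 * (2^j)⁻¹)), by positivity, ?_⟩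
  rintro ⟨t, x⟩ ⟨ht, -⟩ hd
  simp only [mem_Ici] at ht
  rw [Prod.dist_eq, max_lt_iff, Real.dist_eq, Real.dist_eq] at hd
  simp only [lt_min_iff] at hd
  obtain ⟨⟨d1, -, d3⟩, d4, d5, -⟩ := hd
  have htN : t ≤ N := by linarith [(abs_lt.1 d1).2]
  have ht0N : t0 ≤ N := by linarith
  have hxN0 : |x0| ≤ N := by linarith
  have hxN : |x| ≤ N := by
    have := abs_sub_abs_le_abs_sub x x0
    linarith
  have e1 := hSl j t x ht htN hxN
  have e2 := hSl j t0 x0 ht0 ht0N hxN0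
  have e3 : |fd w j t x - fd w j t x0| ≤ S * (99/100)^j := by
    unfold fd
    have f1 := floor_abs_le x N j hxN
    have f2 := floor_abs_le x0 N j hxN0
    have hdiff : |x * 2^j - x0 * 2^j| < 1 := by
      rw [← sub_mul, abs_mul, abs_of_pos h2]
      have := mul_lt_mul_of_pos_right d5 h2
      rwa [inv_mul_cancel₀ h2.ne'] at this
    rw [abs_lt] at hdiff
    have g1 := Int.floor_le (x * 2^j)
    have g2 := Int.lt_floor_add_one (x * 2^j)
    have g3 := Int.floor_le (x0 * 2^j)
    have g4 := Int.lt_floor_add_one (x0 * 2^j)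
    set a := ⌊x * 2^j⌋
    set b := ⌊x0 * 2^j⌋
    have c1 : (a:ℝ) < b + 2 := by linarith
    have c2 : (b:ℝ) < a + 2 := by linarith
    have c1' : a < b + 2 := by exact_mod_cast c1
    have c2' : b < a + 2 := by exact_mod_cast c2
    rcases (by omega : a = b ∨ a = b + 1 ∨ b = a + 1) with h | h | h
    · rw [h, sub_self, abs_zero]; positivity
    · rw [h, abs_sub_comm]; exact hS j b t f2 ht htN
    · rw [h]; exact hS j a t f1 ht htN
  have e4 : |fd w j t x0 - fd w j t0 x0| ≤ η / 2 := by
    refine (Ad_lip w hw j _ t t0).trans ?_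
    have := mul_le_mul_of_nonneg_left d3.le h2.le
    refine this.trans (le_of_eq ?_)
    field_simp
  rw [Real.dist_eq]
  simp only
  have e5 : 201 * S * (99/100:ℝ)^j < η / 2 := hj
  rw [abs_le] at e1 e2 e3 e4
  rw [abs_lt]
  constructor <;> linarith [e1.1, e1.2, e2.1, e2.2, e3.1, e3.2, e4.1, e4.2]

lemma fd_integral (w : ℝ → ℝ) (hw : Continuous w) (t : ℝ) (ht : 0 ≤ t) (d : ℕ) : ∀ (i : ℕ) (k : ℤ),
    ∫ x in cell i k, fd w (i + d) t x = (2^i)⁻¹ * Ad w i k t := by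
  induction d with
  | zero =>
    intro i k
    have : ∫ x in cell i k, fd w (i + 0) t x = ∫ x in cell i k, Ad w i k t := by
      apply setIntegral_congr_fun (measurableSet_cell i k)
      intro x hx
      have hx' : ⌊x * 2^i⌋ = k := hx
      simp only [fd, add_zero, hx']
    rw [this, setIntegral_const, smul_eq_mul, Measure.real, volume_cell,
      ENNReal.toReal_ofReal (by positivity)]
  | succ d ih =>
    intro i k
    rw [cell_split, setIntegral_union (cell_disj _ _ _ (by omega)) (measurableSet_cell _ _)]
    · have e : i + (d + 1) = i + 1 + d := by ring
      rw [e, ih, ih, Ad_split w hw i k]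
      rw [pow_succ]
      field_simp
    all_goals
      refine Measure.integrableOn_of_bounded (M := 2^(i + (d+1)) * t) ?_ ?_ (ae_of_all _ fun x => ?_)
      · rw [volume_cell]; simp
      · exact (Measurable.comp (g := fun k : ℤ => Ad w (i + (d+1)) k t) (Measurable.of_discrete)
          (Int.measurable_floor.comp (by fun_prop : Measurable (fun x : ℝ => x * 2^(i+(d+1)))))).aestronglyMeasurable
      · have := Ad_lip w hw (i + (d+1)) ⌊x * 2^(i + (d+1))⌋ t 0
        rw [sub_zero, abs_of_nonneg ht] at this
        simpa [Ad, fd] using this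

lemma measurable_fd (w : ℝ → ℝ) (j : ℕ) (t : ℝ) : Measurable (fun x => fd w j t x) :=
  Measurable.comp (g := fun k : ℤ => Ad w j k t) (Measurable.of_discrete)
    (Int.measurable_floor.comp (by fun_prop : Measurable (fun x : ℝ => x * 2^j)))

lemma cell_isPiSystem : IsPiSystem (range fun p : ℕ × ℤ => cell p.1 p.2) := by
  have main : ∀ (i d : ℕ) (k l : ℤ), (cell i k ∩ cell (i+d) l).Nonempty →
      cell i k ∩ cell (i+d) l = cell (i+d) l := by
    rintro i d k l ⟨y, hy1, hy2⟩
    apply inter_eq_right.2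
    intro z hz
    have hz' : ⌊z * 2^(i+d)⌋ = l := hz
    have hy2' : ⌊y * 2^(i+d)⌋ = l := hy2
    have := floor_pow z y i d (hz'.trans hy2'.symm)
    exact this.trans hy1
  rintro _ ⟨⟨i, k⟩, rfl⟩ _ ⟨⟨j, l⟩, rfl⟩ h
  rcases le_total i j with hij | hij
  · obtain ⟨d, rfl⟩ := Nat.exists_eq_add_of_le hij
    exact ⟨(i+d, l), (main i d k l h).symm⟩
  · obtain ⟨d, rfl⟩ := Nat.exists_eq_add_of_le hij
    refine ⟨(j+d, k), ?_⟩
    simp only at h ⊢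
    rw [inter_comm] at h ⊢
    exact (main j d l k h).symm

lemma cell_generate : (borel ℝ) = MeasurableSpace.generateFrom (range fun p : ℕ × ℤ => cell p.1 p.2) := by
  apply le_antisymm
  · rw [borel_eq_generateFrom_Iio]
    apply MeasurableSpace.generateFrom_le
    rintro _ ⟨a, rfl⟩
    have : Iio a = ⋃ p ∈ {p : ℕ × ℤ | cell p.1 p.2 ⊆ Iio a}, cell p.1 p.2 := by
      apply Subset.antisymm
      · intro x hx
        simp only [mem_Iio] at hx
        obtain ⟨i, hi⟩ := exists_pow_lt_of_lt_one (sub_pos.2 hx) (by norm_num : (1/2:ℝ) < 1)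
        have hi2 : ((2:ℝ)^i)⁻¹ < a - x := by simpa using hi
        simp only [mem_iUnion]
        refine ⟨(i, ⌊x * 2^i⌋), ?_, rfl⟩
        have hx : x ∈ cell i ⌊x * 2^i⌋ := rfl
        intro y hy
        rw [cell_eq_Ico] at hx hy
        simp only [mem_Iio]
        linarith [hx.1, hy.2]
      · simp only [iUnion_subset_iff]
        intro p hp
        exact hp
    rw [this]
    exact MeasurableSet.biUnion (to_countable _) fun p _ =>
      MeasurableSpace.measurableSet_generateFrom ⟨p, rfl⟩
  · apply MeasurableSpace.generateFrom_le
    rintro _ ⟨p, rfl⟩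
    have := measurableSet_cell p.1 p.2
    rwa [BorelSpace.measurable_eq (α := ℝ)] at this

lemma occupation (w : ℝ → ℝ) (hw : Continuous w) (l : ℝ → ℝ → ℝ)
    (hlim : ∀ t x, 0 ≤ t → Tendsto (fun j => fd w j t x) atTop (nhds (l t x)))
    (hl : ∀ N : ℕ, ∃ S : ℝ, 0 ≤ S ∧ (∀ (j : ℕ) (k : ℤ) (t : ℝ), |k| ≤ N * 2^j → 0 ≤ t →
        t ≤ N → |Ad w j k t - Ad w j (k+1) t| ≤ S * (99/100)^j) ∧
        ∀ (j : ℕ) (t x : ℝ), 0 ≤ t → t ≤ N → |x| ≤ N → |fd w j t x - l t x| ≤ 100 * S * (99/100)^j)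
    (t : ℝ) (ht : 0 ≤ t) (A : Set ℝ) (hA : MeasurableSet A) :
    ∫⁻ s in Icc (0 : ℝ) t, A.indicator (fun _ => (1 : ℝ≥0∞)) (w s) =
      ∫⁻ x in A, ENNReal.ofReal (l t x) := by
  have hl0 : ∀ x, 0 ≤ l t x := fun x =>
    ge_of_tendsto' (hlim t x ht) fun j => Ad_nonneg w j _ t ht
  have hlm : Measurable (l t) := measurable_of_tendsto_metrizable (fun j => measurable_fd w j t)
    (tendsto_pi_nhds.2 fun x => hlim t x ht)
  -- bounds on a cell
  have hcell : ∀ (i : ℕ) (k : ℤ), ∃ M, ∀ x ∈ cell i k, ∀ j, |fd w j t x| ≤ M ∧ |l t x| ≤ M := by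
    intro i k
    obtain ⟨N, hN⟩ := exists_nat_ge (max t (|(k:ℝ)| + 1))
    obtain ⟨S, hS0, -, hS⟩ := hl N
    have htN := (le_max_left _ _).trans hN
    have hkN := (le_max_right _ _).trans hN
    refine ⟨t + 200 * S, fun x hx j => ?_⟩
    have hxN : |x| ≤ N := by
      rw [cell_eq_Ico] at hx
      have h1 : ((2:ℝ)^i)⁻¹ ≤ 1 := inv_le_one_of_one_le₀ (one_le_pow₀ (by norm_num))
      have h0 : (0:ℝ) < ((2:ℝ)^i)⁻¹ := by positivity
      have h2 : |(k:ℝ) * ((2:ℝ)^i)⁻¹| ≤ |(k:ℝ)| := by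
        rw [abs_mul, abs_of_pos h0]
        exact mul_le_of_le_one_right (abs_nonneg _) h1
      rw [abs_le] at h2 ⊢
      constructor <;> linarith [hx.1, hx.2, h2.1, h2.2]
    have b0 := hS 0 t x ht htN hxN
    have bj := hS j t x ht htN hxN
    have bp : 100 * S * (99/100:ℝ)^j ≤ 100 * S :=
      mul_le_of_le_one_right (by positivity) (pow_le_one₀ (by norm_num) (by norm_num))
    have f0 : |fd w 0 t x| ≤ t := by
      have := Ad_lip w hw 0 ⌊x * 2^0⌋ t 0
      rw [sub_zero, abs_of_nonneg ht] at this
      simpa [Ad, fd] using this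
    rw [pow_zero] at b0
    rw [abs_le] at b0 bj f0
    constructor <;> rw [abs_le] <;> constructor <;>
      linarith [b0.1, b0.2, bj.1, bj.2, f0.1, f0.2]
  have hvol : ∀ i k, volume (cell i k) ≠ ∞ := fun i k => by rw [volume_cell]; simp
  have hli : ∀ i k, IntegrableOn (l t) (cell i k) := by
    intro i k
    obtain ⟨M, hM⟩ := hcell i k
    refine Measure.integrableOn_of_bounded (M := M) (hvol i k) hlm.aestronglyMeasurable ?_
    exact (ae_restrict_iff' (measurableSet_cell i k)).2 (ae_of_all _ fun x hx => (hM x hx 0).2)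
  have hint : ∀ i k, ∫ x in cell i k, l t x = (2^i)⁻¹ * Ad w i k t := by
    intro i k
    obtain ⟨M, hM⟩ := hcell i k
    have h1 : Tendsto (fun d => ∫ x in cell i k, fd w (i + d) t x) atTop
        (nhds (∫ x in cell i k, l t x)) := by
      refine tendsto_integral_of_dominated_convergence (fun _ => M)
        (fun d => (measurable_fd w _ t).aestronglyMeasurable)
        (integrableOn_const (hvol i k)) (fun d => ?_) ?_
      · exact (ae_restrict_iff' (measurableSet_cell i k)).2 (ae_of_all _ fun x hx => (hM x hx _).1)
      · refine ae_of_all _ fun x => ?_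
        have := (tendsto_add_atTop_iff_nat i).2 (hlim t x ht)
        simpa [add_comm] using this
    simp only [fd_integral w hw t ht] at h1
    exact (tendsto_const_nhds_iff.1 h1).symm
  set μ : Measure ℝ := (volume.restrict (Icc 0 t)).map w with hμ
  set ν : Measure ℝ := volume.withDensity (fun x => ENNReal.ofReal (l t x)) with hν
  have hfin : IsFiniteMeasure μ := by
    rw [hμ]; exact Measure.isFiniteMeasure_map _ _
  have hμA : ∀ A, MeasurableSet A →
      ∫⁻ s in Icc (0 : ℝ) t, A.indicator (fun _ => (1 : ℝ≥0∞)) (w s) = μ A := by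
    intro A hA
    rw [← lintegral_indicator_one hA, hμ, lintegral_map (measurable_one.indicator hA) hw.measurable]
    rfl
  have hνA : ∀ A, MeasurableSet A → ∫⁻ x in A, ENNReal.ofReal (l t x) = ν A := by
    intro A hA
    rw [hν, withDensity_apply _ hA]
  have hcelleq : ∀ i k, μ (cell i k) = ν (cell i k) := by
    intro i k
    rw [← hνA _ (measurableSet_cell i k), ← ofReal_integral_eq_lintegral_ofReal (hli i k)
      (ae_of_all _ hl0), hint, Ad, ← mul_assoc, inv_mul_cancel₀ (by positivity), one_mul,
      intervalIntegral.integral_of_le ht, ofReal_integral_eq_lintegral_ofReal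
      ((intervalIntegrable_iff_integrableOn_Ioc_of_le ht).1 (ic_integrable w hw i k 0 t))
      (ae_of_all _ fun s => ic_nonneg _ _ _), ← hμA _ (measurableSet_cell i k),
      restrict_Ioc_eq_restrict_Icc]
    apply lintegral_congr
    intro s
    unfold ic
    by_cases h : w s ∈ cell i k <;> simp [h]
  have hEq : μ = ν := by
    refine Measure.ext_of_generateFrom_of_cover_subset (S := range fun p : ℕ × ℤ => cell p.1 p.2)
      (T := range fun p : ℕ × ℤ => cell p.1 p.2)
      ((BorelSpace.measurable_eq (α := ℝ)).trans cell_generate)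
      cell_isPiSystem Subset.rfl (countable_range _) ?_ ?_ ?_
    · apply eq_univ_of_forall
      intro x
      exact ⟨_, ⟨(0, ⌊x * 2^0⌋), rfl⟩, rfl⟩
    · intro s _
      exact measure_ne_top μ s
    · rintro _ ⟨p, rfl⟩
      exact hcelleq p.1 p.2
  rw [hμA A hA, hνA A hA, hEq]

lemma gd_eq_ic (j : ℕ) (k : ℤ) (y : ℝ) :
    gd ((2^j)⁻¹) (k * (2^j)⁻¹) y = 2^j * (ic j k y - ic j (k+1) y) := by
  unfold gd ic
  rw [cell_eq_Ico j k, cell_eq_Ico j (k+1), inv_inv]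
  push_cast
  rw [add_one_mul]

lemma Df_eq {Ω : Type*} (B : ℝ≥0 → Ω → ℝ) (hBc : ∀ ω, Continuous fun t => B t ω)
    (j : ℕ) (k : ℤ) (t : ℝ) (ω : Ω) :
    Df B j k t ω = Ad (fun s => B s.toNNReal ω) j k t - Ad (fun s => B s.toNNReal ω) j (k+1) t := by
  have hw : Continuous (fun s : ℝ => B s.toNNReal ω) := (hBc ω).comp continuous_real_toNNReal
  unfold Df Xf Ad
  simp only [gd_eq_ic, zero_add]
  rw [intervalIntegral.integral_const_mul, intervalIntegral.integral_sub
    (ic_integrable _ hw _ _ _ _) (ic_integrable _ hw _ _ _ _), mul_sub]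

lemma measurable_fd_omega {Ω : Type*} [MeasurableSpace Ω] (B : ℝ≥0 → Ω → ℝ)
    (hBm : ∀ t, Measurable (B t)) (hBc : ∀ ω, Continuous fun t => B t ω)
    (j : ℕ) (t x : ℝ) (ht : 0 ≤ t) :
    Measurable (fun ω => fd (fun s => B s.toNNReal ω) j t x) := by
  have h := (measurable_Xf (ic j ⌊x * 2^j⌋) (measurable_ic _ _) B hBm hBc t ht).comp
      (measurable_prodMk_left (x := (0:ℝ)))
  have h2 := h.const_mul (2^j)
  simpa [Xf, fd, Ad, Function.comp_def] using h2

lemma preBrownian_of {Ω : Type*} [MeasurableSpace Ω] (P : Measure Ω) (W : ℝ → Ω → ℝ)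
    (hW : IsBrownianMotion P W) : IsPreBrownianReal (fun (t : ℝ≥0) ω => W t ω) P := by
  have := hW.isProb
  refine HasIndepIncrements.isPreBrownianReal_of_hasLaw (fun t => ?_) (fun n t ht => ?_)
  · refine ⟨(hW.meas t).aemeasurable, ?_⟩
    have h := hW.incr_law 0 t le_rfl t.2
    have h0 := hW.init
    simpa [h0] using h
  · exact hW.indep_incr n (fun i => (t i : ℝ)) (fun i j hij => NNReal.coe_le_coe.2 (ht hij)) (t 0).2


/-- Trotter's existence theorem: there is a nonnegative random field `L`,
jointly continuous in `(t, x)` on `[0,∞) × ℝ` for almost every `ω`, such that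
almost surely, for every `t ≥ 0` and Borel `B ⊆ ℝ`,
`∫_0^t 1_B (W_s) ds = ∫_B L_t(x) dx`. -/
theorem trotter_existence_local_time
    {Ω : Type*} [MeasurableSpace Ω] (P : Measure Ω) (W : ℝ → Ω → ℝ)
    (hW : IsBrownianMotion P W) :
    ∃ L : ℝ → ℝ → Ω → ℝ,
      (∀ t x ω, 0 ≤ L t x ω) ∧
      (∀ t x, Measurable fun ω => L t x ω) ∧
      (∀ᵐ ω ∂P, ContinuousOn (fun p : ℝ × ℝ => L p.1 p.2 ω) (Ici 0 ×ˢ univ)) ∧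
      (∀ᵐ ω ∂P, ∀ t : ℝ, 0 ≤ t → ∀ B : Set ℝ, MeasurableSet B →
        ∫⁻ s in Icc (0 : ℝ) t, B.indicator (fun _ => (1 : ℝ≥0∞)) (W s ω) =
          ∫⁻ x in B, ENNReal.ofReal (L t x ω)) := by
  have hprob := hW.isProb
  have hae := hW.cont
  rw [ae_iff] at hae
  set Z := toMeasurable P {ω | ¬ Continuous fun t => W t ω} with hZ
  have hZm : MeasurableSet Z := measurableSet_toMeasurable _ _
  have hZ0 : P Z = 0 := by rw [hZ, measure_toMeasurable]; exact hae
  have hZc : ∀ᵐ ω ∂P, ω ∉ Z := measure_eq_zero_iff_ae_notMem.1 hZ0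
  set B : ℝ≥0 → Ω → ℝ := fun t => Zᶜ.indicator (W t) with hB
  have hBW : ∀ ω, ω ∉ Z → ∀ t, B t ω = W t ω := by
    intro ω hω t
    simp [hB, hω]
  have hBm : ∀ t, Measurable (B t) := fun t => (hW.meas t).indicator hZm.compl
  have hBc : ∀ ω, Continuous fun t => B t ω := by
    intro ω
    by_cases hω : ω ∈ Z
    · simp only [hB, indicator, mem_compl_iff, hω, not_true, if_false]
      exact continuous_const
    · have h1 : Continuous fun t => W t ω := by
        by_contra h
        exact hω (subset_toMeasurable P _ h)
      simp only [hBW ω hω]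
      exact h1.comp NNReal.continuous_coe
  have hpre : IsPreBrownianReal B P := by
    refine (preBrownian_of P W hW).congr fun t => ?_
    filter_upwards [hZc] with ω hω
    exact (hBW ω hω t).symm
  have hstar := star_bound P B hpre hBm hBc
  have hgood : ∀ᵐ ω ∂P, StarB (fun s => B s.toNNReal ω) := by
    filter_upwards [hstar] with ω hω N
    obtain ⟨S, hS⟩ := hω N
    refine ⟨S, fun j k t hk ht htN => ?_⟩
    rw [← Df_eq B hBc]
    exact hS j k t hk ht htN
  refine ⟨fun t x ω => if 0 ≤ t then
    max 0 (limsup (fun j => fd (fun s => B s.toNNReal ω) j t x) atTop) else 0, ?_, ?_, ?_, ?_⟩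
  · intro t x ω
    dsimp only
    split_ifs
    · exact le_max_left _ _
    · exact le_rfl
  · intro t x
    by_cases ht : 0 ≤ t
    · simp only [ht, if_true]
      exact measurable_const.max (Measurable.limsup fun j => measurable_fd_omega B hBm hBc j t x ht)
    · simp only [ht, if_false]
      exact measurable_const
  all_goals
    filter_upwards [hgood, hZc] with ω hω hωZ
    have hw : Continuous (fun s : ℝ => B s.toNNReal ω) := (hBc ω).comp continuous_real_toNNReal
    obtain ⟨l, hlim, hl⟩ := fd_lim _ hw hω
    have hLl : ∀ t x, 0 ≤ t → (if 0 ≤ t then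
        max 0 (limsup (fun j => fd (fun s => B s.toNNReal ω) j t x) atTop) else 0) = l t x := by
      intro t x ht
      rw [if_pos ht, (hlim t x ht).limsup_eq]
      exact max_eq_right (ge_of_tendsto' (hlim t x ht) fun j => Ad_nonneg _ j _ t ht)
  · refine (lim_cont _ hw l hl).congr ?_
    rintro ⟨t, x⟩ ⟨ht, -⟩
    exact hLl t x ht
  · intro t ht A hA
    simp only [hLl t _ ht]
    rw [← occupation _ hw l hlim hl t ht A hA]
    apply setLIntegral_congr_fun measurableSet_Icc
    intro s hs
    simp only
    rw [hBW ω hωZ, Real.coe_toNNReal s hs.1]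
end
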